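/- arXiv:2309.13768 — 3 statements merged into one kernel-verified Lean document; each statement's English description precedes it below -/
import Mathlib

section
/- Let n ≥ 1. Let Ω₁ = 𝔹^{n₁} × ⋯ × 𝔹^{n_l} ⊆ ℂⁿ with generic norm ρ₁(z) = ∏_{i=1}^l (1−‖z⁽ⁱ⁾‖²)^{p_i} (positive integer exponents with some p_{i₀} = 1), and Ω₂ = 𝔹^{m₁} × ⋯ × 𝔹^{m_{l'}} ⊆ ℂⁿ with generic norm ρ₂(w) = ∏_{j=1}^{l'} (1−‖w⁽ʲ⁾‖²)^{q_j} (positive integer exponents with some q_{j₀} = 1), where n₁+⋯+n_l = m₁+⋯+m_{l'} = n. Assume l ≥ 2 or l' ≥ 2 (i.e., Ω₁ or Ω₂ has rank at least two). Let Σ₁, Σ₂ ⊆ ℂ^{n+1} be the corresponding circle bundles. Let U ⊆ ℂ^{n+1} be a connected open set with U ∩ Σ₁ ≠ ∅ and let F : U → ℂ^{n+1} be a nonconstant holomorphic map with F(U ∩ Σ₁) ⊆ Σ₂. Then there exist a biholomorphism ψ : Ω₁ → Ω₂ and a holomorphic function φ : Ω₁ → ℂ with φ(z) ≠ 0 for all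 z ∈ Ω₁, such that ρ₂(ψ(z)) = |φ(z)|² ρ₁(z) for all z ∈ Ω₁ and the map G(z,ξ) = (ψ(z), ξ·φ(z)) coincides with F on some nonempty open subset of U. -/
noncomputable section

open Complex

/-- `Biholo f s t`: `f` is a biholomorphism from `s` onto `t`. -/
def Biholo {E F : Type*} [NormedAddCommGroup E] [NormedSpace ℂ E]
    [NormedAddCommGroup F] [NormedSpace ℂ F]
    (f : E → F) (s : Set E) (t : Set F) : Prop :=
  DifferentiableOn ℂ f s ∧ Set.MapsTo f s t ∧
    ∃ g : F → E, DifferentiableOn ℂ g t ∧ Set.MapsTo g t s ∧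
      Set.LeftInvOn g f s ∧ Set.RightInvOn g f t

/-- The squared Hermitian norm of the `i`-th block of coordinates `z` of `ℂⁿ`. -/
def blockSq {n l : ℕ} (β : Fin n → Fin l) (i : Fin l) (z : Fin n → ℂ) : ℝ :=
  ∑ j ∈ Finset.univ.filter (fun j => β j = i), Complex.normSq (z j)

/-- The product of balls `𝔹^{n₁} × ⋯ × 𝔹^{n_l} ⊆ ℂⁿ` determined by `β`. -/
def prodBalls {n l : ℕ} (β : Fin n → Fin l) : Set (Fin n → ℂ) :=
  {z | ∀ i, blockSq β i z < 1}

/-- The generalized generic norm `ρ(z) = ∏ᵢ (1 − ‖z⁽ⁱ⁾‖²)^{pᵢ}`. -/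
def gnorm {n l : ℕ} (β : Fin n → Fin l) (p : Fin l → ℕ) (z : Fin n → ℂ) : ℝ :=
  ∏ i, (1 - blockSq β i z) ^ (p i)

/-- The circle bundle `Σ(Ω, ρ) = {(z,ξ) ∈ Ω × ℂ : |ξ|² = ρ(z)}`. -/
def circBundle {n l : ℕ} (β : Fin n → Fin l) (p : Fin l → ℕ) : Set ((Fin n → ℂ) × ℂ) :=
  {P | P.1 ∈ prodBalls β ∧ Complex.normSq P.2 = gnorm β p P.1}

open Filter Topology ComplexConjugate

/-- The complex bilinear pairing of the `i`-th blocks. -/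
def bil {n l : ℕ} (β : Fin n → Fin l) (i : Fin l) (z w : Fin n → ℂ) : ℂ :=
  ∑ j ∈ Finset.univ.filter (fun j => β j = i), z j * w j

/-- The polarized generic norm. -/
def polNorm {n l : ℕ} (β : Fin n → Fin l) (p : Fin l → ℕ) (z w : Fin n → ℂ) : ℂ :=
  ∏ i, (1 - bil β i z w) ^ (p i)

section Bil
variable {n l : ℕ} (β : Fin n → Fin l) (i : Fin l)

lemma bil_add_left (z z' w : Fin n → ℂ) : bil β i (z + z') w = bil β i z w + bil β i z' w := by
  simp [bil, add_mul, Finset.sum_add_distrib]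

lemma bil_smul_left (c : ℂ) (z w : Fin n → ℂ) : bil β i (c • z) w = c * bil β i z w := by
  simp [bil, Finset.mul_sum, mul_assoc]

lemma bil_comm (z w : Fin n → ℂ) : bil β i z w = bil β i w z := by
  simp [bil, mul_comm]

lemma bil_smul_right (c : ℂ) (z w : Fin n → ℂ) : bil β i z (c • w) = c * bil β i z w := by
  simp only [bil_comm β i z, bil_smul_left]

@[simp] lemma bil_zero_left (w : Fin n → ℂ) : bil β i 0 w = 0 := by simp [bil]

@[simp] lemma bil_zero_right (w : Fin n → ℂ) : bil β i w 0 = 0 := by simp [bil]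

lemma bil_star (z w : Fin n → ℂ) : bil β i (star z) (star w) = conj (bil β i z w) := by
  simp [bil]

lemma bil_self_star (z : Fin n → ℂ) : bil β i z (star z) = (blockSq β i z : ℂ) := by
  simp [bil, blockSq, mul_conj]

lemma blockSq_nonneg (z : Fin n → ℂ) : 0 ≤ blockSq β i z :=
  Finset.sum_nonneg fun _ _ => normSq_nonneg _

@[simp] lemma blockSq_zero : blockSq β i 0 = 0 := by simp [blockSq]

lemma blockSq_star (z : Fin n → ℂ) : blockSq β i (star z) = blockSq β i z := by
  simp [blockSq]

lemma zero_mem_prodBalls : (0 : Fin n → ℂ) ∈ prodBalls β := fun i => by simp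

lemma star_mem_prodBalls {β : Fin n → Fin l} {z : Fin n → ℂ} (hz : z ∈ prodBalls β) :
    star z ∈ prodBalls β := fun i => by
  rw [blockSq_star]; exact hz i

lemma normSq_bil_le (z w : Fin n → ℂ) :
    normSq (bil β i z w) ≤ blockSq β i z * blockSq β i w := by
  rw [normSq_eq_norm_sq]
  have h1 : ‖bil β i z w‖ ≤ ∑ j ∈ Finset.univ.filter (fun j => β j = i), ‖z j‖ * ‖w j‖ :=
    (norm_sum_le _ _).trans (by simp)
  have h2 := Finset.sum_mul_sq_le_sq_mul_sq (Finset.univ.filter (fun j => β j = i))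
    (fun j => ‖z j‖) (fun j => ‖w j‖)
  simp only [blockSq, normSq_eq_norm_sq]
  exact (pow_le_pow_left₀ (norm_nonneg _) h1 2).trans h2

variable {β}

lemma norm_bil_lt_one {z w : Fin n → ℂ} (hz : z ∈ prodBalls β) (hw : w ∈ prodBalls β) :
    ‖bil β i z w‖ < 1 := by
  have h := normSq_bil_le β i z w
  have h1 := hz i
  have h2 := hw i
  have h3 := blockSq_nonneg β i z
  have h4 := blockSq_nonneg β i w
  rw [normSq_eq_norm_sq] at h
  have : ‖bil β i z w‖ ^ 2 < 1 := by nlinarith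
  exact (sq_lt_one_iff₀ (norm_nonneg _)).1 this

lemma one_sub_mem_slitPlane {u : ℂ} (h : ‖u‖ < 1) : 1 - u ∈ slitPlane := by
  rw [sub_eq_add_neg]; exact mem_slitPlane_of_norm_lt_one (by simpa using h)

lemma one_sub_bil_ne_zero {z w : Fin n → ℂ} (hz : z ∈ prodBalls β) (hw : w ∈ prodBalls β) :
    1 - bil β i z w ≠ 0 :=
  slitPlane_ne_zero (one_sub_mem_slitPlane (norm_bil_lt_one i hz hw))

lemma isOpen_prodBalls : IsOpen (prodBalls β) := by
  simp only [prodBalls, Set.ofPred_forall]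
  refine isOpen_iInter_of_finite fun i => isOpen_lt ?_ continuous_const
  unfold blockSq
  fun_prop

variable (β)

@[fun_prop]
lemma DifferentiableAt.bil {G : Type*} [NormedAddCommGroup G] [NormedSpace ℂ G]
    {u v : G → Fin n → ℂ} {x : G} (hu : DifferentiableAt ℂ u x) (hv : DifferentiableAt ℂ v x) :
    DifferentiableAt ℂ (fun x => bil β i (u x) (v x)) x := by
  unfold _root_.bil
  fun_prop

@[fun_prop]
lemma Continuous.bil {G : Type*} [TopologicalSpace G]
    {u v : G → Fin n → ℂ} (hu : Continuous u) (hv : Continuous v) :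
    Continuous fun x => bil β i (u x) (v x) := by
  unfold _root_.bil
  fun_prop

lemma HasDerivAt.bil {u v : ℂ → Fin n → ℂ} {u' v' : Fin n → ℂ} {x : ℂ}
    (hu : HasDerivAt u u' x) (hv : HasDerivAt v v' x) :
    HasDerivAt (fun x => bil β i (u x) (v x)) (bil β i u' (v x) + bil β i (u x) v') x := by
  unfold _root_.bil
  rw [← Finset.sum_add_distrib]
  exact HasDerivAt.fun_sum fun j _ =>
    (hasDerivAt_pi.1 hu j).mul (hasDerivAt_pi.1 hv j)

end Bil

section Mobius
variable {n l : ℕ} (β : Fin n → Fin l)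

/-- The involutive automorphism of a product of balls that exchanges `0` and `a`. -/
def mob (a z : Fin n → ℂ) : Fin n → ℂ := fun j =>
  (a j - (√(1 - blockSq β (β j) a) : ℂ) * z j -
    bil β (β j) z (star a) * a j / (1 + (√(1 - blockSq β (β j) a) : ℂ))) /
  (1 - bil β (β j) z (star a))

/-- On each block, `mob` is a linear combination of `a` and `z`. -/
lemma bil_mob_left (a z w : Fin n → ℂ) (i : Fin l) :
    bil β i (mob β a z) w =
      (bil β i a w - (√(1 - blockSq β i a) : ℂ) * bil β i z w -
        bil β i z (star a) * bil β i a w / (1 + (√(1 - blockSq β i a) : ℂ))) /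
      (1 - bil β i z (star a)) := by
  have : bil β i (mob β a z) w = ∑ j ∈ Finset.univ.filter (fun j => β j = i),
      (a j - (√(1 - blockSq β i a) : ℂ) * z j -
        bil β i z (star a) * a j / (1 + (√(1 - blockSq β i a) : ℂ))) /
      (1 - bil β i z (star a)) * w j := by
    refine Finset.sum_congr rfl fun j hj => ?_
    have hj' : β j = i := by simpa using hj
    simp only [mob, hj']
  rw [this]
  have hb : bil β i a w = ∑ j ∈ Finset.univ.filter (fun j => β j = i), a j * w j := rfl
  have hb' : bil β i z w = ∑ j ∈ Finset.univ.filter (fun j => β j = i), z j * w j := rfl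
  rw [hb, hb', Finset.mul_sum, Finset.mul_sum, Finset.sum_div, ← Finset.sum_sub_distrib,
    ← Finset.sum_sub_distrib, Finset.sum_div]
  refine Finset.sum_congr rfl fun j _ => ?_
  ring

variable {β} {a z : Fin n → ℂ}

lemma sqrt_facts (ha : a ∈ prodBalls β) (i : Fin l) :
    ((√(1 - blockSq β i a) : ℝ) : ℂ) ^ 2 = 1 - (blockSq β i a : ℂ) ∧
      (1 + (√(1 - blockSq β i a) : ℝ) : ℂ) ≠ 0 ∧ ((√(1 - blockSq β i a) : ℝ) : ℂ) ≠ 0 := by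
  have h0 : 0 < 1 - blockSq β i a := sub_pos.2 (ha i)
  have h1 := Real.sqrt_pos.2 h0
  refine ⟨?_, ?_, ?_⟩
  · rw [← ofReal_pow, Real.sq_sqrt h0.le]; simp
  · rw [← ofReal_one, ← ofReal_add]; exact ofReal_ne_zero.2 (by positivity)
  · exact ofReal_ne_zero.2 h1.ne'

lemma one_sub_bil_mob_star (ha : a ∈ prodBalls β) (hz : z ∈ prodBalls β) (i : Fin l) :
    1 - bil β i (mob β a z) (star a) =
      (1 - (blockSq β i a : ℂ)) / (1 - bil β i z (star a)) := by
  obtain ⟨h1, h2, h3⟩ := sqrt_facts ha i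
  have h4 := one_sub_bil_ne_zero i hz (star_mem_prodBalls ha)
  rw [bil_mob_left, bil_self_star]
  generalize ((√(1 - blockSq β i a) : ℝ) : ℂ) = s at *
  have hA : (blockSq β i a : ℂ) = 1 - s ^ 2 := by rw [h1]; ring
  rw [hA]
  field_simp
  ring

lemma one_sub_blockSq_mob (ha : a ∈ prodBalls β) (hz : z ∈ prodBalls β) (i : Fin l) :
    1 - blockSq β i (mob β a z) =
      (1 - blockSq β i a) * (1 - blockSq β i z) / normSq (1 - bil β i z (star a)) := by
  obtain ⟨h1, h2, h3⟩ := sqrt_facts ha i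
  have h4 := one_sub_bil_ne_zero i hz (star_mem_prodBalls ha)
  have h5 : 1 - conj (bil β i z (star a)) ≠ 0 := by
    intro h; apply h4
    have := congrArg conj h
    simpa using this
  apply ofReal_injective
  push_cast
  rw [← mul_conj, ← bil_self_star, bil_mob_left, bil_comm β i a, bil_comm β i z (star (mob β a z))]
  have key : ∀ w : Fin n → ℂ, bil β i (star (mob β a z)) w
      = conj (bil β i (mob β a z) (star w)) := by
    intro w; rw [← bil_star]; simp
  rw [key, key, bil_mob_left, bil_mob_left, bil_comm β i a (star z), bil_self_star, bil_self_star]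
  have h6 : bil β i (star z) a = conj (bil β i z (star a)) := by rw [← bil_star]; simp
  rw [h6]
  simp only [map_div₀, map_sub, map_mul, map_add, map_one, conj_ofReal, conj_conj]
  generalize ((√(1 - blockSq β i a) : ℝ) : ℂ) = s at *
  generalize bil β i z (star a) = α at *
  generalize conj α = α' at *
  have hA : (blockSq β i a : ℂ) = 1 - s ^ 2 := by rw [h1]; ring
  rw [hA]
  field_simp
  ring

lemma mob_mem (ha : a ∈ prodBalls β) (hz : z ∈ prodBalls β) : mob β a z ∈ prodBalls β := by
  intro i
  have h := one_sub_blockSq_mob ha hz i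
  have h1 := normSq_pos.2 (one_sub_bil_ne_zero i hz (star_mem_prodBalls ha))
  have : 0 < 1 - blockSq β i (mob β a z) := by
    rw [h]
    have := sub_pos.2 (ha i)
    have := sub_pos.2 (hz i)
    positivity
  linarith

lemma mob_mob (ha : a ∈ prodBalls β) (hz : z ∈ prodBalls β) : mob β a (mob β a z) = z := by
  ext j
  obtain ⟨h1, h2, h3⟩ := sqrt_facts ha (β j)
  have h4 := one_sub_bil_ne_zero (β j) hz (star_mem_prodBalls ha)
  have h := one_sub_bil_mob_star ha hz (β j)
  have h' : bil β (β j) (mob β a z) (star a) =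
    1 - (1 - (blockSq β (β j) a : ℂ)) / (1 - bil β (β j) z (star a)) := by rw [← h]; ring
  rw [mob, h, h', mob]
  generalize ((√(1 - blockSq β (β j) a) : ℝ) : ℂ) = s at *
  rw [← h1]
  field_simp
  ring

lemma mob_self (ha : a ∈ prodBalls β) : mob β a a = 0 := by
  ext j
  obtain ⟨h1, h2, h3⟩ := sqrt_facts ha (β j)
  rw [mob, bil_self_star]
  generalize ((√(1 - blockSq β (β j) a) : ℝ) : ℂ) = s at *
  have hA : (blockSq β (β j) a : ℂ) = 1 - s ^ 2 := by rw [h1]; ring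
  rw [hA]
  simp only [Pi.zero_apply, div_eq_zero_iff]
  left
  field_simp
  ring

lemma mob_zero : mob β a 0 = a := by
  ext j; simp [mob]

lemma differentiableAt_mob (ha : a ∈ prodBalls β) (hz : z ∈ prodBalls β) :
    DifferentiableAt ℂ (mob β a) z := by
  unfold mob
  refine differentiableAt_pi.2 fun j => ?_
  have h4 := one_sub_bil_ne_zero (β j) hz (star_mem_prodBalls ha)
  fun_prop (disch := assumption)

end Mobius

section Bundle
variable {n l : ℕ} {β : Fin n → Fin l} {p : Fin l → ℕ} {a z : Fin n → ℂ}

lemma gnorm_pos (p : Fin l → ℕ) (hz : z ∈ prodBalls β) : 0 < gnorm β p z :=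
  Finset.prod_pos fun i _ => pow_pos (sub_pos.2 (hz i)) _

lemma polNorm_ne_zero (p : Fin l → ℕ) {w : Fin n → ℂ} (hz : z ∈ prodBalls β)
    (hw : w ∈ prodBalls β) : polNorm β p z w ≠ 0 :=
  Finset.prod_ne_zero_iff.2 fun i _ => pow_ne_zero _ (one_sub_bil_ne_zero i hz hw)

lemma polNorm_self_star (z : Fin n → ℂ) : polNorm β p z (star z) = (gnorm β p z : ℂ) := by
  simp [polNorm, gnorm, bil_self_star]

@[simp] lemma polNorm_zero_left (z : Fin n → ℂ) : polNorm β p 0 z = 1 := by simp [polNorm]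

lemma polNorm_mob_star (ha : a ∈ prodBalls β) (hz : z ∈ prodBalls β) :
    polNorm β p (mob β a z) (star a) = gnorm β p a / polNorm β p z (star a) := by
  simp only [polNorm, gnorm, one_sub_bil_mob_star ha hz, div_pow, Finset.prod_div_distrib]
  push_cast
  rfl

lemma gnorm_mob (ha : a ∈ prodBalls β) (hz : z ∈ prodBalls β) :
    gnorm β p (mob β a z) =
      gnorm β p a * gnorm β p z / normSq (polNorm β p z (star a)) := by
  simp only [polNorm, gnorm, one_sub_blockSq_mob ha hz, div_pow, mul_pow,
    Finset.prod_div_distrib, Finset.prod_mul_distrib, map_prod, map_pow]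

@[fun_prop]
lemma DifferentiableAt.polNorm {G : Type*} [NormedAddCommGroup G] [NormedSpace ℂ G]
    {u v : G → Fin n → ℂ} {x : G} (hu : DifferentiableAt ℂ u x) (hv : DifferentiableAt ℂ v x) :
    DifferentiableAt ℂ (fun x => polNorm β p (u x) (v x)) x := by
  unfold _root_.polNorm
  fun_prop

variable (β p) in
/-- The lift of `mob β a` to the line bundle, scaled by `c` on the fibres. -/
def bundleMob (a : Fin n → ℂ) (c : ℂ) (P : (Fin n → ℂ) × ℂ) : (Fin n → ℂ) × ℂ :=
  (mob β a P.1, P.2 * (c / polNorm β p P.1 (star a)))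

lemma bundleMob_bundleMob (ha : a ∈ prodBalls β) {c c' : ℂ} (hc : c' * c = gnorm β p a)
    {P : (Fin n → ℂ) × ℂ} (hP : P.1 ∈ prodBalls β) :
    bundleMob β p a c (bundleMob β p a c' P) = P := by
  have h0 := polNorm_ne_zero p hP (star_mem_prodBalls ha)
  have h1 : (gnorm β p a : ℂ) ≠ 0 := ofReal_ne_zero.2 (gnorm_pos p ha).ne'
  refine Prod.ext (mob_mob ha hP) ?_
  simp only [bundleMob, polNorm_mob_star ha hP]
  rw [← hc] at h1 ⊢
  have := left_ne_zero_of_mul h1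
  have := right_ne_zero_of_mul h1
  field_simp

lemma differentiableAt_bundleMob (ha : a ∈ prodBalls β) (c : ℂ)
    {P : (Fin n → ℂ) × ℂ} (hP : P.1 ∈ prodBalls β) : DifferentiableAt ℂ (bundleMob β p a c) P := by
  have h0 := polNorm_ne_zero p hP (star_mem_prodBalls ha)
  unfold bundleMob
  have h1 : DifferentiableAt ℂ (fun P : (Fin n → ℂ) × ℂ => mob β a P.1) P :=
    (differentiableAt_mob ha hP).comp P differentiableAt_fst
  have h2 : DifferentiableAt ℂ (fun P : (Fin n → ℂ) × ℂ =>
      P.2 * (c / polNorm β p P.1 (star a))) P := by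
    fun_prop (disch := assumption)
  exact h1.prodMk h2

lemma normSq_bundleMob (ha : a ∈ prodBalls β) {c : ℂ} (hc : normSq c = gnorm β p a)
    {P : (Fin n → ℂ) × ℂ} (hP : P.1 ∈ prodBalls β) :
    normSq (bundleMob β p a c P).2 * gnorm β p P.1 = normSq P.2 * gnorm β p (bundleMob β p a c P).1 := by
  simp only [bundleMob, map_mul, map_div₀, gnorm_mob ha hP, hc]
  ring

lemma bundleMob_mem_circBundle (ha : a ∈ prodBalls β) {c : ℂ} (hc : normSq c = gnorm β p a)
    {P : (Fin n → ℂ) × ℂ} (hP : P ∈ circBundle β p) : bundleMob β p a c P ∈ circBundle β p := by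
  refine ⟨mob_mem ha hP.1, ?_⟩
  have h := normSq_bundleMob ha hc hP.1
  rw [hP.2, mul_comm] at h
  exact mul_left_cancel₀ (gnorm_pos p hP.1).ne' h

lemma bundleMob_self {P : (Fin n → ℂ) × ℂ} (hP : P ∈ circBundle β p) :
    bundleMob β p P.1 (conj P.2) P = (0, 1) := by
  have h1 : (gnorm β p P.1 : ℂ) ≠ 0 := ofReal_ne_zero.2 (gnorm_pos p hP.1).ne'
  refine Prod.ext (mob_self hP.1) ?_
  simp only [bundleMob, polNorm_self_star]
  rw [← mul_div_assoc, mul_conj, hP.2, div_self h1]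

lemma bundleMob_zero (a : Fin n → ℂ) (c x : ℂ) : bundleMob β p a c (0, x) = (a, x * c) := by
  simp [bundleMob, mob_zero]

end Bundle

section Holomorphic
variable {G : Type*} [NormedAddCommGroup G] [NormedSpace ℂ G]

/-- Cauchy's estimate for the Fréchet derivative. -/
lemma norm_fderiv_le_of_norm_le {f : G → ℂ} {x : G} {r M : ℝ} (hr : 0 < r) (hM : 0 ≤ M)
    (hd : ∀ y ∈ Metric.ball x r, DifferentiableAt ℂ f y)
    (hb : ∀ y ∈ Metric.ball x r, ‖f y‖ ≤ M) : ‖fderiv ℂ f x‖ ≤ M / (r / 2) := by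
  refine ContinuousLinearMap.opNorm_le_bound _ (by positivity) fun v => ?_
  rcases eq_or_ne v 0 with rfl | hv
  · simp
  have hv' : 0 < ‖v‖ := norm_pos_iff.2 hv
  have hline : HasDerivAt (fun t : ℂ => x + t • v) v 0 := by
    simpa using ((hasDerivAt_id (0 : ℂ)).smul_const v).const_add x
  have h0 : HasDerivAt (fun t : ℂ => f (x + t • v)) (fderiv ℂ f x v) 0 := by
    have := (hd x (Metric.mem_ball_self hr)).hasFDerivAt
    have h2 : HasFDerivAt f (fderiv ℂ f x) (x + (0 : ℂ) • v) := by simpa using this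
    exact h2.comp_hasDerivAt 0 hline
  have hmem : ∀ t ∈ Metric.closedBall (0 : ℂ) (r / 2 / ‖v‖), x + t • v ∈ Metric.ball x r := by
    intro t ht
    rw [mem_closedBall_zero_iff, le_div_iff₀ hv'] at ht
    rw [mem_ball_iff_norm]
    simp only [add_sub_cancel_left, norm_smul]
    linarith
  have hdiff : DifferentiableOn ℂ (fun t : ℂ => f (x + t • v))
      (Metric.closedBall (0 : ℂ) (r / 2 / ‖v‖)) := fun t ht =>
    ((hd _ (hmem t ht)).comp t (by fun_prop : DifferentiableAt ℂ (fun t : ℂ => x + t • v) t)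
      ).differentiableWithinAt
  have := norm_deriv_le_of_forall_mem_sphere_norm_le (f := fun t : ℂ => f (x + t • v)) (c := 0)
    (C := M) (R := r / 2 / ‖v‖) (by positivity) (hdiff.diffContOnCl_ball le_rfl)
    (fun t ht => hb _ (hmem t (Metric.sphere_subset_closedBall ht)))
  rw [h0.deriv] at this
  refine this.trans (le_of_eq ?_)
  field_simp

/-- A partial derivative of a holomorphic function is holomorphic. -/
lemma DifferentiableAt.deriv_snd [FiniteDimensional ℂ G] {f : G × ℂ → ℂ} {x₀ : G}
    (hf : ∀ᶠ P in 𝓝 (x₀, (0 : ℂ)), DifferentiableAt ℂ f P) :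
    DifferentiableAt ℂ (fun x => deriv (fun y => f (x, y)) 0) x₀ := by
  have hcont : ContinuousAt f (x₀, 0) := hf.self_of_nhds.continuousAt
  have hbd : ∀ᶠ P in 𝓝 (x₀, (0 : ℂ)), ‖f P‖ ≤ ‖f (x₀, 0)‖ + 1 := by
    have := hcont.norm.eventually (ge_mem_nhds (lt_add_one ‖f (x₀, 0)‖))
    exact this
  obtain ⟨r, hr, hball⟩ := Metric.eventually_nhds_iff_ball.1 (hf.and hbd)
  set M := ‖f (x₀, 0)‖ + 1
  have hM : 0 ≤ M := by positivity
  set ρ := r / 3 with hρ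
  have hρ0 : 0 < ρ := by positivity
  have hmem : ∀ x ∈ Metric.ball x₀ ρ, ∀ y ∈ Metric.closedBall (0 : ℂ) ρ,
      ∀ P ∈ Metric.ball (x, y) ρ, P ∈ Metric.ball (x₀, (0 : ℂ)) r := by
    intro x hx y hy P hP
    rw [Metric.mem_ball, Prod.dist_eq, max_lt_iff] at hP ⊢
    rw [Metric.mem_ball] at hx
    rw [Metric.mem_closedBall] at hy
    refine ⟨(dist_triangle _ x _).trans_lt ?_, (dist_triangle _ y _).trans_lt ?_⟩
    · linarith [hP.1]
    · linarith [hP.2]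
  have hmem' : ∀ x ∈ Metric.ball x₀ ρ, ∀ y ∈ Metric.closedBall (0 : ℂ) ρ,
      (x, y) ∈ Metric.ball (x₀, (0 : ℂ)) r := fun x hx y hy =>
    hmem x hx y hy _ (Metric.mem_ball_self hρ0)
  have hd : ∀ x ∈ Metric.ball x₀ ρ, ∀ y ∈ Metric.closedBall (0 : ℂ) ρ,
      DifferentiableAt ℂ (fun y => f (x, y)) y := fun x hx y hy =>
    ((hball _ (hmem' x hx y hy)).1).comp y
      (by fun_prop : DifferentiableAt ℂ (fun y : ℂ => (x, y)) y)
  have hsph : ∀ t : ℝ, circleMap 0 ρ t ∈ Metric.closedBall (0 : ℂ) ρ := fun t =>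
    circleMap_mem_closedBall 0 hρ0.le t
  have hrep : ∀ x ∈ Metric.ball x₀ ρ, deriv (fun y => f (x, y)) 0 =
      ∫ t in (0 : ℝ)..2 * Real.pi, ((2 * Real.pi * I : ℂ)⁻¹ * deriv (circleMap 0 ρ) t *
        (circleMap 0 ρ t ^ 2)⁻¹) * f (x, circleMap 0 ρ t) := by
    intro x hx
    have h := (DifferentiableOn.diffContOnCl_ball (U := Metric.closedBall (0 : ℂ) ρ)
      (fun y hy => (hd x hx y hy).differentiableWithinAt) le_rfl).deriv_eq_smul_circleIntegral hρ0
    have h2 : (2 * Real.pi * I : ℂ) ≠ 0 := by simp [Real.pi_ne_zero]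
    rw [← inv_smul_smul₀ h2 (deriv (fun y => f (x, y)) 0), ← h, circleIntegral,
      ← intervalIntegral.integral_smul]
    refine intervalIntegral.integral_congr fun t _ => ?_
    simp only [smul_eq_mul, sub_zero]
    ring
  have hcirc : Continuous fun t : ℝ => (2 * Real.pi * I : ℂ)⁻¹ * deriv (circleMap 0 ρ) t *
        (circleMap 0 ρ t ^ 2)⁻¹ := by
    have h1 : ∀ t, circleMap 0 ρ t ^ 2 ≠ 0 := fun t => pow_ne_zero _ (by
      simpa using hρ0.ne')
    have h2 : Continuous (circleMap 0 ρ) := continuous_circleMap 0 ρ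
    have h3 : Continuous (deriv (circleMap 0 ρ)) := by
      have : deriv (circleMap 0 ρ) = fun t => circleMap 0 ρ t * I := by
        ext t; simp [deriv_circleMap]
      rw [this]; fun_prop
    exact (continuous_const.mul h3).mul ((h2.pow 2).inv₀ h1)
  have hfc : ∀ x ∈ Metric.ball x₀ ρ, Continuous fun t : ℝ => f (x, circleMap 0 ρ t) := by
    intro x hx
    refine continuous_iff_continuousAt.2 fun t => ?_
    exact ((hd x hx _ (hsph t)).continuousAt).comp (continuous_circleMap 0 ρ).continuousAt
  have hs : Metric.ball x₀ ρ ∈ 𝓝 x₀ := Metric.ball_mem_nhds _ hρ0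
  borelize (G × ℂ)
  borelize (G × ℂ →L[ℂ] ℂ)
  borelize (G →L[ℂ] ℂ)
  have key := intervalIntegral.hasFDerivAt_integral_of_dominated_of_fderiv_le
    (μ := MeasureTheory.volume) (a := 0) (b := 2 * Real.pi) (𝕜 := ℂ) (s := Metric.ball x₀ ρ)
    (F := fun x t => ((2 * Real.pi * I : ℂ)⁻¹ * deriv (circleMap 0 ρ) t *
        (circleMap 0 ρ t ^ 2)⁻¹) * f (x, circleMap 0 ρ t))
    (F' := fun x t => ((2 * Real.pi * I : ℂ)⁻¹ * deriv (circleMap 0 ρ) t *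
        (circleMap 0 ρ t ^ 2)⁻¹) •
          (fderiv ℂ f (x, circleMap 0 ρ t)).comp (ContinuousLinearMap.inl ℂ G ℂ))
    (bound := fun t => ‖(2 * Real.pi * I : ℂ)⁻¹ * deriv (circleMap 0 ρ) t *
        (circleMap 0 ρ t ^ 2)⁻¹‖ * (M / (ρ / 2) * ‖ContinuousLinearMap.inl ℂ G ℂ‖))
    (x₀ := x₀) hs ?_ ?_ ?_ ?_ ?_ ?_
  · refine key.differentiableAt.congr_of_eventuallyEq ?_
    filter_upwards [hs] with x hx using hrep x hx
  · filter_upwards [hs] with x hx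
    exact (hcirc.mul (hfc x hx)).aestronglyMeasurable
  · exact (hcirc.mul (hfc x₀ (Metric.mem_ball_self hρ0))).intervalIntegrable _ _
  · refine hcirc.aestronglyMeasurable.smul ?_
    have h1 : Measurable fun t : ℝ => fderiv ℂ f (x₀, circleMap 0 ρ t) :=
      (measurable_fderiv ℂ f).comp
        (continuous_const.prodMk (continuous_circleMap 0 ρ)).measurable
    have h2 : Continuous fun L : G × ℂ →L[ℂ] ℂ => L.comp (ContinuousLinearMap.inl ℂ G ℂ) := by
      fun_prop
    exact (h2.measurable.comp h1).aestronglyMeasurable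
  · refine Eventually.of_forall fun t _ x hx => ?_
    rw [norm_smul]
    refine mul_le_mul_of_nonneg_left ?_ (norm_nonneg _)
    refine (ContinuousLinearMap.opNorm_comp_le _ _).trans ?_
    refine mul_le_mul_of_nonneg_right ?_ (norm_nonneg _)
    exact norm_fderiv_le_of_norm_le hρ0 hM
      (fun P hP => (hball P (hmem x hx _ (hsph t) P hP)).1)
      (fun P hP => (hball P (hmem x hx _ (hsph t) P hP)).2)
  · exact (hcirc.norm.mul continuous_const).intervalIntegrable _ _
  · refine Eventually.of_forall fun t _ x hx => ?_
    have h1 : HasFDerivAt f (fderiv ℂ f (x, circleMap 0 ρ t)) (x, circleMap 0 ρ t) :=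
      (hball _ (hmem' x hx _ (hsph t))).1.hasFDerivAt
    have h2 : HasFDerivAt (fun x : G => (x, circleMap 0 ρ t)) (ContinuousLinearMap.inl ℂ G ℂ) x :=
      hasFDerivAt_prodMk_left x _
    exact (h1.comp x h2).const_mul _

end Holomorphic

section HolomorphicGerms
variable {G : Type*} [NormedAddCommGroup G] [NormedSpace ℂ G]

/-- Directional derivatives of a holomorphic function are holomorphic. -/
lemma DifferentiableAt.fderiv_apply [FiniteDimensional ℂ G] {f : G → ℂ} {x₀ : G}
    (hf : ∀ᶠ x in 𝓝 x₀, DifferentiableAt ℂ f x) (v : G) :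
    DifferentiableAt ℂ (fun x => fderiv ℂ f x v) x₀ := by
  have hline : Continuous fun P : G × ℂ => P.1 + P.2 • v := by fun_prop
  have ht : Tendsto (fun P : G × ℂ => P.1 + P.2 • v) (𝓝 (x₀, 0)) (𝓝 x₀) := by
    simpa using hline.tendsto (x₀, 0)
  have h := DifferentiableAt.deriv_snd (f := fun P : G × ℂ => f (P.1 + P.2 • v)) (x₀ := x₀) (by
    filter_upwards [ht.eventually hf] with P hP
    exact hP.comp P (by fun_prop : DifferentiableAt ℂ (fun P : G × ℂ => P.1 + P.2 • v) P))
  refine h.congr_of_eventuallyEq ?_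
  filter_upwards [hf] with x hx
  have h1 : HasDerivAt (fun y : ℂ => x + y • v) v 0 := by
    simpa using ((hasDerivAt_id (0 : ℂ)).smul_const v).const_add x
  have h2 : HasFDerivAt f (fderiv ℂ f x) (x + (0 : ℂ) • v) := by simpa using hx.hasFDerivAt
  exact (h2.comp_hasDerivAt 0 h1).deriv.symm

lemma Filter.Eventually.differentiableAt_fderiv_apply [FiniteDimensional ℂ G] {f : G → ℂ} {x₀ : G}
    (hf : ∀ᶠ x in 𝓝 x₀, DifferentiableAt ℂ f x) (v : G) :
    ∀ᶠ x in 𝓝 x₀, DifferentiableAt ℂ (fun x => fderiv ℂ f x v) x := by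
  filter_upwards [hf.eventually_nhds] with x hx using DifferentiableAt.fderiv_apply hx v

/-- A holomorphic function on a disc that vanishes on the real diameter vanishes identically. -/
lemma eqOn_zero_of_forall_ofReal {g : ℂ → ℂ} {R : ℝ}
    (hg : DifferentiableOn ℂ g (Metric.ball 0 R))
    (h0 : ∀ t : ℝ, |t| < R → g t = 0) : Set.EqOn g 0 (Metric.ball 0 R) := by
  intro w hw
  have hR : 0 < R := Metric.pos_of_mem_ball hw
  refine (hg.analyticOnNhd Metric.isOpen_ball).eqOn_zero_of_preconnected_of_frequently_eq_zero
    (convex_ball 0 R).isPreconnected (Metric.mem_ball_self hR) ?_ hw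
  have h1 : ∃ᶠ t : ℝ in 𝓝[≠] (0 : ℝ), g t = 0 := by
    refine Eventually.frequently ?_
    filter_upwards [nhdsWithin_le_nhds (Metric.ball_mem_nhds (0 : ℝ) hR)] with t ht
    exact h0 t (by simpa using ht)
  have h2 : Tendsto (fun t : ℝ => (t : ℂ)) (𝓝[≠] 0) (𝓝[≠] 0) := by
    refine tendsto_nhdsWithin_iff.2 ⟨?_, ?_⟩
    · exact (continuous_ofReal.tendsto' 0 0 (by simp)).mono_left nhdsWithin_le_nhds
    · filter_upwards [self_mem_nhdsWithin] with t ht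
      simpa using ht
  exact h2.frequently h1

/-- A holomorphic germ that vanishes on the fixed points of a conjugation vanishes. -/
lemma eventually_eq_zero_of_fixed {Φ : G → ℂ} {σ : G → G}
    (hadd : ∀ x y, σ (x + y) = σ x + σ y) (hsmul : ∀ (c : ℂ) x, σ (c • x) = conj c • σ x)
    (hinv : ∀ x, σ (σ x) = x) (hnorm : ∀ x, ‖σ x‖ = ‖x‖)
    (hΦ : ∀ᶠ x in 𝓝 0, DifferentiableAt ℂ Φ x)
    (h0 : ∀ᶠ x in 𝓝 0, σ x = x → Φ x = 0) : ∀ᶠ x in 𝓝 0, Φ x = 0 := by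
  obtain ⟨r, hr, hball⟩ := Metric.eventually_nhds_iff_ball.1 (hΦ.and h0)
  refine Metric.eventually_nhds_iff_ball.2 ⟨r / 3, by positivity, fun x hx => ?_⟩
  rw [mem_ball_zero_iff] at hx
  obtain ⟨a, ha⟩ : ∃ a : G, a = (1 / 2 : ℂ) • (x + σ x) := ⟨_, rfl⟩
  obtain ⟨b, hb⟩ : ∃ b : G, b = (-I / 2 : ℂ) • (x + (-1 : ℂ) • σ x) := ⟨_, rfl⟩
  have hσa : σ a = a := by
    rw [ha, hsmul, hadd, hinv, add_comm]
    congr 1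
    simp [map_ofNat]
  have hσb : σ b = b := by
    rw [hb, hsmul, hadd, hsmul, hinv]
    have : conj (-I / 2) = I / 2 := by simp [map_ofNat]
    rw [this, smul_add, smul_add, smul_smul, smul_smul, add_comm]
    congr 2
    · simp; ring
    · ring
  have hna : ‖a‖ ≤ ‖x‖ := by
    rw [ha, norm_smul]
    have := norm_add_le x (σ x)
    rw [hnorm] at this
    simp; linarith
  have hnb : ‖b‖ ≤ ‖x‖ := by
    rw [hb, norm_smul]
    have := norm_add_le x ((-1 : ℂ) • σ x)
    rw [norm_smul, hnorm] at this
    simp at this ⊢; linarith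
  have hmem : ∀ t ∈ Metric.ball (0 : ℂ) 2, a + t • b ∈ Metric.ball (0 : G) r := by
    intro t ht
    rw [mem_ball_zero_iff] at ht ⊢
    refine (norm_add_le _ _).trans_lt ?_
    rw [norm_smul]
    nlinarith [norm_nonneg x, norm_nonneg b, norm_nonneg t]
  have hI : a + I • b = x := by
    rw [ha, hb, smul_smul]
    have : I * (-I / 2) = 1 / 2 := by
      rw [mul_div_assoc', mul_neg, I_mul_I, neg_neg]
    rw [this, ← smul_add]
    have h2 : x + σ x + (x + (-1 : ℂ) • σ x) = (2 : ℂ) • x := by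
      rw [two_smul]; simp; abel
    rw [h2, smul_smul]; simp
  have := eqOn_zero_of_forall_ofReal (g := fun t => Φ (a + t • b)) (R := 2)
    (fun t ht => ((hball _ (hmem t ht)).1.comp t
      (by fun_prop : DifferentiableAt ℂ (fun t : ℂ => a + t • b) t)).differentiableWithinAt)
    (fun t ht => (hball _ (hmem t (by simpa using ht))).2 (by
      rw [hadd, hsmul, hσa, hσb, conj_ofReal]))
    (show I ∈ Metric.ball (0 : ℂ) 2 by simp)
  simpa [hI] using this

/-- A germ with vanishing derivative is constant. -/
lemma eventually_eq_of_fderiv_eq_zero {H : Type*} [NormedAddCommGroup H] [NormedSpace ℂ H]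
    {f : G → H} {x₀ : G} (hf : ∀ᶠ x in 𝓝 x₀, DifferentiableAt ℂ f x)
    (h0 : ∀ᶠ x in 𝓝 x₀, fderiv ℂ f x = 0) : ∀ᶠ x in 𝓝 x₀, f x = f x₀ := by
  obtain ⟨r, hr, hball⟩ := Metric.eventually_nhds_iff_ball.1 (hf.and h0)
  refine Metric.eventually_nhds_iff_ball.2 ⟨r, hr, fun x hx => ?_⟩
  let : NormedSpace ℝ G := NormedSpace.restrictScalars ℝ ℂ G
  exact (convex_ball x₀ r).is_const_of_fderivWithin_eq_zero (𝕜 := ℂ) (f := f)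
    (fun y hy => (hball y hy).1.differentiableWithinAt)
    (fun y hy => by
      rw [fderivWithin_of_isOpen Metric.isOpen_ball hy]; exact (hball y hy).2) hx
    (Metric.mem_ball_self hr)

/-- Identity theorem: a holomorphic map on a connected open set that is constant near a point is
constant. -/
lemma eqOn_const_of_eventually_eq {m : ℕ} {f : G → (Fin m → ℂ) × ℂ} {U : Set G} (hU : IsOpen U)
    (hc : IsPreconnected U) (hf : DifferentiableOn ℂ f U) {x₀ : G} (hx₀ : x₀ ∈ U)
    {c : (Fin m → ℂ) × ℂ} (h0 : ∀ᶠ x in 𝓝 x₀, f x = c) : Set.EqOn f (fun _ => c) U := by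
  set S : Set G := {x | ∀ᶠ y in 𝓝 x, f y = c} with hS
  have hSo : IsOpen S := isOpen_iff_mem_nhds.2 fun x hx => hx.eventually_nhds
  have hsub : U ⊆ S := by
    refine hc.subset_of_closure_inter_subset hSo ⟨x₀, hx₀, h0⟩ ?_
    rintro x ⟨hxS, hxU⟩
    obtain ⟨r, hr, hball⟩ := Metric.isOpen_iff.1 hU x hxU
    obtain ⟨y, hyS, hxy⟩ := Metric.mem_closure_iff.1 hxS (r / 4) (by positivity)
    refine Metric.eventually_nhds_iff_ball.2 ⟨r / 4, by positivity, fun w hw => ?_⟩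
    have hyw : ‖w - y‖ < r / 2 := by
      rw [← dist_eq_norm]
      have := dist_triangle w x y
      rw [Metric.mem_ball] at hw
      linarith
    have hmem : ∀ t ∈ Metric.ball (0 : ℂ) (3 / 2), y + t • (w - y) ∈ U := by
      intro t ht
      refine hball ?_
      rw [mem_ball_zero_iff] at ht
      rw [Metric.mem_ball]
      have h1 : dist (y + t • (w - y)) y = ‖t‖ * ‖w - y‖ := by
        rw [dist_eq_norm, add_sub_cancel_left, norm_smul]
      have h2 := dist_triangle (y + t • (w - y)) y x
      rw [dist_comm] at hxy
      nlinarith [norm_nonneg t, norm_nonneg (w - y)]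
    have hfd : ∀ t ∈ Metric.ball (0 : ℂ) (3 / 2),
        DifferentiableAt ℂ (fun t : ℂ => f (y + t • (w - y))) t := fun t ht =>
      (hf.differentiableAt (hU.mem_nhds (hmem t ht))).comp t
        (by fun_prop : DifferentiableAt ℂ (fun t : ℂ => y + t • (w - y)) t)
    have ht : Tendsto (fun t : ℂ => y + t • (w - y)) (𝓝 0) (𝓝 y) := by
      have : Continuous fun t : ℂ => y + t • (w - y) := by fun_prop
      simpa using this.tendsto 0
    have hA : AnalyticOnNhd ℂ (fun t : ℂ => f (y + t • (w - y))) (Metric.ball 0 (3 / 2)) :=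
      DifferentiableOn.analyticOnNhd (fun t ht => (hfd t ht).differentiableWithinAt)
        Metric.isOpen_ball
    have := hA.eqOn_of_preconnected_of_eventuallyEq (g := fun _ => c) analyticOnNhd_const
      (convex_ball 0 _).isPreconnected (Metric.mem_ball_self (by norm_num))
      (ht.eventually hyS) (show (1 : ℂ) ∈ Metric.ball (0 : ℂ) (3 / 2) by norm_num)
    simpa using this
  exact fun x hx => (hsub hx).self_of_nhds

end HolomorphicGerms

section Potential
variable {n l : ℕ} (β : Fin n → Fin l) (p : Fin l → ℕ)

/-- The polarized Kähler potential `-log ρ`. -/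
def pot (z w : Fin n → ℂ) : ℂ := -∑ i, (p i : ℂ) * log (1 - bil β i z w)

/-- The differential of `pot` in the first variable at `(z, w)`, in the direction `v`. -/
def dpot (z w v : Fin n → ℂ) : ℂ := ∑ i, (p i : ℂ) * (bil β i v w / (1 - bil β i z w))

@[simp] lemma pot_zero_left (w : Fin n → ℂ) : pot β p 0 w = 0 := by simp [pot]

@[simp] lemma pot_zero_right (z : Fin n → ℂ) : pot β p z 0 = 0 := by simp [pot]

lemma pot_comm (z w : Fin n → ℂ) : pot β p z w = pot β p w z := by
  simp [pot, bil_comm β _ z w]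

variable {β} {z w : Fin n → ℂ}

lemma conj_pot (hz : z ∈ prodBalls β) (hw : w ∈ prodBalls β) :
    conj (pot β p z w) = pot β p (star z) (star w) := by
  simp only [pot, map_neg, map_sum, map_mul, map_natCast, neg_inj]
  refine Finset.sum_congr rfl fun i _ => ?_
  rw [← log_conj _ (mem_slitPlane_iff_arg.1
    (one_sub_mem_slitPlane (norm_bil_lt_one i hz hw))).1, map_sub, map_one, bil_star]

lemma exp_neg_pot (hz : z ∈ prodBalls β) (hw : w ∈ prodBalls β) :
    exp (-pot β p z w) = polNorm β p z w := by
  simp only [pot, neg_neg, exp_sum, polNorm]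
  refine Finset.prod_congr rfl fun i _ => ?_
  rw [exp_nat_mul, exp_log (one_sub_bil_ne_zero i hz hw)]

lemma pot_self_star (hz : z ∈ prodBalls β) :
    pot β p z (star z) = -(Real.log (gnorm β p z) : ℂ) := by
  simp only [pot, bil_self_star, gnorm]
  rw [Real.log_prod fun i _ => (pow_pos (sub_pos.2 (hz i)) _).ne']
  push_cast
  congr 1
  refine Finset.sum_congr rfl fun i _ => ?_
  rw [Real.log_pow, ofReal_mul, ofReal_log (sub_pos.2 (hz i)).le]
  simp

variable (β)

lemma HasDerivAt.pot {u v : ℂ → Fin n → ℂ} {u' v' : Fin n → ℂ} {x : ℂ}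
    (hu : HasDerivAt u u' x) (hv : HasDerivAt v v' x) (hux : u x ∈ prodBalls β)
    (hvx : v x ∈ prodBalls β) :
    HasDerivAt (fun t => pot β p (u t) (v t)) (dpot β p (u x) (v x) u' + dpot β p (v x) (u x) v')
      x := by
  have h : HasDerivAt (fun t => -∑ i, (p i : ℂ) * Complex.log (1 - _root_.bil β i (u t) (v t)))
      (-∑ i, (p i : ℂ) * (-(_root_.bil β i u' (v x) + _root_.bil β i (u x) v') /
        (1 - _root_.bil β i (u x) (v x)))) x := by
    refine (HasDerivAt.fun_sum fun i _ => ?_).neg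
    exact (((hu.bil β i hv).const_sub 1).clog
      (one_sub_mem_slitPlane (norm_bil_lt_one i hux hvx))).const_mul _
  refine h.congr_deriv ?_
  simp only [dpot, ← Finset.sum_add_distrib, ← Finset.sum_neg_distrib]
  refine Finset.sum_congr rfl fun i _ => ?_
  rw [bil_comm β i (v x) (u x), bil_comm β i v' (u x)]
  ring

lemma DifferentiableAt.pot {G : Type*} [NormedAddCommGroup G] [NormedSpace ℂ G]
    {u v : G → Fin n → ℂ} {x : G} (hu : DifferentiableAt ℂ u x) (hv : DifferentiableAt ℂ v x)
    (hux : u x ∈ prodBalls β) (hvx : v x ∈ prodBalls β) :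
    DifferentiableAt ℂ (fun x => pot β p (u x) (v x)) x := by
  unfold _root_.pot
  refine (DifferentiableAt.fun_sum fun i _ => ?_).neg
  exact (((hu.bil β i hv).const_sub 1).clog
      (one_sub_mem_slitPlane (norm_bil_lt_one i hux hvx))).const_mul _

lemma DifferentiableAt.dpot {G : Type*} [NormedAddCommGroup G] [NormedSpace ℂ G]
    {u v s : G → Fin n → ℂ} {x : G} (hu : DifferentiableAt ℂ u x) (hv : DifferentiableAt ℂ v x)
    (hs : DifferentiableAt ℂ s x) (hux : u x ∈ prodBalls β) (hvx : v x ∈ prodBalls β) :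
    DifferentiableAt ℂ (fun x => dpot β p (u x) (v x) (s x)) x := by
  simp only [_root_.dpot, div_eq_mul_inv]
  refine DifferentiableAt.fun_sum fun i _ => ?_
  have h := (hu.bil β i hv).const_sub 1
  exact ((hs.bil β i hv).mul (h.inv (one_sub_bil_ne_zero i hux hvx))).const_mul _

lemma eventually_mem_prodBalls {G : Type*} [TopologicalSpace G] {u : G → Fin n → ℂ} {x : G}
    (hu : ContinuousAt u x) (h : u x ∈ prodBalls β) : ∀ᶠ y in 𝓝 x, u y ∈ prodBalls β :=
  hu.eventually (isOpen_prodBalls.mem_nhds h)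

/-- The points of the universal cover of the circle bundle, in logarithmic fibre coordinates. -/
def IsRealPt (x : (Fin n → ℂ) × ℂ) : Prop := x.2 + conj x.2 + pot β p x.1 (star x.1) = 0

/-- The complexification of the set of real points. -/
def OnSegre (P : ((Fin n → ℂ) × ℂ) × ((Fin n → ℂ) × ℂ)) : Prop :=
  P.1.2 + P.2.2 + pot β p P.1.1 P.2.1 = 0

lemma eventually_mem_fst : ∀ᶠ x : (Fin n → ℂ) × ℂ in 𝓝 0, x.1 ∈ prodBalls β :=
  eventually_mem_prodBalls β continuous_fst.continuousAt (zero_mem_prodBalls β)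

/-- Polarization: a holomorphic germ vanishing at the real points vanishes on the
complexification. -/
lemma eventually_onSegre_imp {Φ : ((Fin n → ℂ) × ℂ) × ((Fin n → ℂ) × ℂ) → ℂ}
    (hΦ : ∀ᶠ P in 𝓝 0, DifferentiableAt ℂ Φ P)
    (h0 : ∀ᶠ x in 𝓝 0, IsRealPt β p x → Φ (x, star x) = 0) :
    ∀ᶠ P in 𝓝 0, OnSegre β p P → Φ P = 0 := by
  let θ : (Fin n → ℂ) × (Fin n → ℂ) × ℂ → ((Fin n → ℂ) × ℂ) × ((Fin n → ℂ) × ℂ) := fun e =>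
    ((e.1, e.2.2 - pot β p e.1 e.2.1 / 2), (e.2.1, -e.2.2 - pot β p e.1 e.2.1 / 2))
  have hθ0 : θ 0 = 0 := by simp [θ]
  have hball : ∀ᶠ e : (Fin n → ℂ) × (Fin n → ℂ) × ℂ in 𝓝 0,
      e.1 ∈ prodBalls β ∧ e.2.1 ∈ prodBalls β :=
    (eventually_mem_prodBalls β continuous_fst.continuousAt (zero_mem_prodBalls β)).and
      (eventually_mem_prodBalls β (continuous_fst.comp continuous_snd).continuousAt
        (zero_mem_prodBalls β))
  have hθd : ∀ᶠ e in 𝓝 0, DifferentiableAt ℂ θ e := by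
    filter_upwards [hball] with e he
    have hp : DifferentiableAt ℂ (fun e : (Fin n → ℂ) × (Fin n → ℂ) × ℂ => pot β p e.1 e.2.1) e :=
      DifferentiableAt.pot β p (by fun_prop) (by fun_prop) he.1 he.2
    fun_prop
  have hθt : Tendsto θ (𝓝 0) (𝓝 0) := by
    simpa [hθ0] using hθd.self_of_nhds.continuousAt.tendsto
  have key := eventually_eq_zero_of_fixed (G := (Fin n → ℂ) × (Fin n → ℂ) × ℂ)
    (Φ := fun e => Φ (θ e)) (σ := fun e => (star e.2.1, star e.1, -star e.2.2))
    (fun x y => by simp [add_comm]) (fun c x => by simp)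
    (fun x => by simp) (fun x => by
      simp only [Prod.norm_def, norm_star, norm_neg]
      rw [max_left_comm])
    (by
      filter_upwards [hθt.eventually hΦ, hθd] with e h1 h2 using h1.comp e h2)
    (by
      filter_upwards [(continuous_fst.tendsto' 0 0 rfl).comp hθt |>.eventually h0, hball]
        with e h1 h2 h3
      simp only [Prod.ext_iff] at h3
      obtain ⟨h3, -, h4⟩ := h3
      have hK : conj (pot β p e.1 e.2.1) = pot β p e.1 e.2.1 := by
        rw [conj_pot p h2.1 h2.2, h3, pot_comm, ← h3, star_star]
      have h5 : (θ e).2 = star (θ e).1 := by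
        simp only [θ, Prod.ext_iff, Prod.fst_star, Prod.snd_star, star_sub, ← h3, star_star,
          true_and]
        have : star (pot β p e.1 e.2.1 / 2) = pot β p e.1 e.2.1 / 2 := by
          change conj _ = _
          rw [map_div₀, hK, map_ofNat]
        rw [h3, this, neg_eq_iff_eq_neg.1 h4]
      have h6 := h1 (by
        have h7 : (θ e).1.2 + (θ e).2.2 + pot β p (θ e).1.1 (θ e).2.1 = 0 := by
          simp only [θ]; ring
        rw [h5] at h7
        exact h7)
      have h8 : θ e = ((θ e).1, star (θ e).1) := by rw [← h5]
      rw [h8]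
      exact h6)
  let τ : ((Fin n → ℂ) × ℂ) × ((Fin n → ℂ) × ℂ) → (Fin n → ℂ) × (Fin n → ℂ) × ℂ := fun P =>
    (P.1.1, P.2.1, (P.1.2 - P.2.2) / 2)
  have hτ : Tendsto τ (𝓝 0) (𝓝 0) := by
    have : Continuous τ := by fun_prop
    exact this.tendsto' _ _ (by simp [τ])
  filter_upwards [hτ.eventually key] with P hP hM
  have : θ (τ P) = P := by
    have h1 : pot β p P.1.1 P.2.1 = -(P.1.2 + P.2.2) := by
      rw [OnSegre] at hM; linear_combination hM
    simp only [θ, τ, h1]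
    ext1 <;> ext1
    · rfl
    · simp; ring
    · rfl
    · simp; ring
  rwa [this] at hP

/-- A holomorphic germ vanishing at the real points vanishes. -/
lemma eventually_eq_zero_of_isRealPt {k : (Fin n → ℂ) × ℂ → ℂ}
    (hk : ∀ᶠ x in 𝓝 0, DifferentiableAt ℂ k x)
    (h0 : ∀ᶠ x in 𝓝 0, IsRealPt β p x → k x = 0) : ∀ᶠ x in 𝓝 0, k x = 0 := by
  have h1 := eventually_onSegre_imp β p (Φ := fun P => k P.1) (by
    filter_upwards [(continuous_fst.tendsto' (0 : ((Fin n → ℂ) × ℂ) × ((Fin n → ℂ) × ℂ)) 0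
      rfl).eventually hk] with P hP
    exact hP.comp P differentiableAt_fst) h0
  have ht : Tendsto (fun x : (Fin n → ℂ) × ℂ => (x, ((0 : Fin n → ℂ), -x.2))) (𝓝 0) (𝓝 0) := by
    have : Continuous (fun x : (Fin n → ℂ) × ℂ => (x, ((0 : Fin n → ℂ), -x.2))) := by fun_prop
    exact this.tendsto' _ _ (by simp)
  filter_upwards [ht.eventually h1] with x hx
  exact hx (by simp [OnSegre])

end Potential

lemma Filter.Eventually.differentiableAt_fderiv_apply_pi {G : Type*} [NormedAddCommGroup G]
    [NormedSpace ℂ G] [FiniteDimensional ℂ G] {m : ℕ} {f : G → Fin m → ℂ} {x₀ : G}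
    (hf : ∀ᶠ x in 𝓝 x₀, DifferentiableAt ℂ f x) (v : G) :
    ∀ᶠ x in 𝓝 x₀, DifferentiableAt ℂ (fun x => fderiv ℂ f x v) x := by
  have h1 : ∀ j, ∀ᶠ x in 𝓝 x₀, DifferentiableAt ℂ (fun x => fderiv ℂ (fun x => f x j) x v) x :=
    fun j => Filter.Eventually.differentiableAt_fderiv_apply
      (hf.mono fun x hx => differentiableAt_pi.1 hx j) v
  filter_upwards [eventually_all.2 h1, hf.eventually_nhds] with x hx hx'
  refine differentiableAt_pi.2 fun j => (hx j).congr_of_eventuallyEq ?_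
  filter_upwards [hx'] with y hy
  have := (hasFDerivAt_pi'.1 hy.hasFDerivAt j).fderiv
  rw [this]; rfl

lemma HasFDerivAt.hasDerivAt_line {G H : Type*} [NormedAddCommGroup G] [NormedSpace ℂ G]
    [NormedAddCommGroup H] [NormedSpace ℂ H] {f : G → H} {f' : G →L[ℂ] H} {x : G}
    (hf : HasFDerivAt f f' x) {u : ℂ → G} {v : G} {t : ℂ} (hu : HasDerivAt u v t) (hx : u t = x) :
    HasDerivAt (fun t => f (u t)) (f' v) t := by
  subst hx
  exact hf.comp_hasDerivAt t hu

section Herm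
variable {n l : ℕ} (β : Fin n → Fin l) (p : Fin l → ℕ)

/-- The weighted bilinear pairing `∑ pᵢ ⟨z⁽ⁱ⁾, w⁽ⁱ⁾⟩`. -/
def herm (z w : Fin n → ℂ) : ℂ := ∑ i, (p i : ℂ) * bil β i z w

/-- The weighted quartic form `∑ pᵢ ⟨z⁽ⁱ⁾, w⁽ⁱ⁾⟩²`. -/
def quart (z w : Fin n → ℂ) : ℂ := ∑ i, (p i : ℂ) * bil β i z w ^ 2

lemma herm_comm (z w : Fin n → ℂ) : herm β p z w = herm β p w z := by
  simp [herm, bil_comm β _ z w]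

lemma herm_eq_sum (z w : Fin n → ℂ) : herm β p z w = ∑ j, (p (β j) : ℂ) * (z j * w j) := by
  simp only [herm, bil, Finset.mul_sum, Finset.sum_filter]
  rw [Finset.sum_comm]
  refine Finset.sum_congr rfl fun j _ => ?_
  simp

lemma herm_add_left (z z' w : Fin n → ℂ) : herm β p (z + z') w = herm β p z w + herm β p z' w := by
  simp [herm, bil_add_left, mul_add, Finset.sum_add_distrib]

lemma herm_smul_left (c : ℂ) (z w : Fin n → ℂ) : herm β p (c • z) w = c * herm β p z w := by
  simp only [herm, bil_smul_left, Finset.mul_sum]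
  exact Finset.sum_congr rfl fun _ _ => by ring

lemma herm_smul_right (c : ℂ) (z w : Fin n → ℂ) : herm β p z (c • w) = c * herm β p z w := by
  rw [herm_comm, herm_smul_left, herm_comm]

lemma herm_sub_left (z z' w : Fin n → ℂ) : herm β p (z - z') w = herm β p z w - herm β p z' w := by
  have : z - z' = z + (-1 : ℂ) • z' := by simp [sub_eq_add_neg]
  rw [this, herm_add_left, herm_smul_left]; ring

@[simp] lemma herm_zero_left (w : Fin n → ℂ) : herm β p 0 w = 0 := by simp [herm]

@[simp] lemma herm_zero_right (w : Fin n → ℂ) : herm β p w 0 = 0 := by simp [herm]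

lemma quart_smul_left (c : ℂ) (z w : Fin n → ℂ) : quart β p (c • z) w = c ^ 2 * quart β p z w := by
  simp only [quart, bil_smul_left, Finset.mul_sum]
  exact Finset.sum_congr rfl fun _ _ => by ring

lemma herm_self_star (z : Fin n → ℂ) :
    herm β p z (star z) = ((∑ i, (p i : ℝ) * blockSq β i z : ℝ) : ℂ) := by
  simp [herm, bil_self_star]

lemma eq_zero_of_herm_eq_zero (hp : ∀ i, 0 < p i) {z : Fin n → ℂ} (h : ∀ w, herm β p z w = 0) :
    z = 0 := by
  ext j
  have := h (Pi.single j 1)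
  simp only [herm_eq_sum, Pi.single_apply, mul_ite, mul_one, mul_zero, Finset.sum_ite_eq',
    Finset.mem_univ, if_true] at this
  rcases mul_eq_zero.1 this with h1 | h1
  · exact absurd h1 (by exact_mod_cast (hp _).ne')
  · exact h1

lemma HasDerivAt.herm {u v : ℂ → Fin n → ℂ} {u' v' : Fin n → ℂ} {x : ℂ}
    (hu : HasDerivAt u u' x) (hv : HasDerivAt v v' x) :
    HasDerivAt (fun x => herm β p (u x) (v x)) (herm β p u' (v x) + herm β p (u x) v') x := by
  unfold _root_.herm
  rw [← Finset.sum_add_distrib]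
  simp only [← mul_add]
  exact HasDerivAt.fun_sum fun i _ => (hu.bil β i hv).const_mul _

@[simp] lemma dpot_zero_left (w v : Fin n → ℂ) : dpot β p 0 w v = herm β p v w := by
  simp [dpot, herm]

@[simp] lemma dpot_zero_mid (z v : Fin n → ℂ) : dpot β p z 0 v = 0 := by
  simp [dpot]

@[simp] lemma dpot_zero_right (z w : Fin n → ℂ) : dpot β p z w 0 = 0 := by
  simp [dpot]

lemma hasDerivAt_pot_smul {z : Fin n → ℂ} (hz : z ∈ prodBalls β) (w : Fin n → ℂ) :
    HasDerivAt (fun t : ℂ => pot β p z (t • w)) (herm β p z w) 0 := by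
  have h := HasDerivAt.pot β p (hasDerivAt_const (0 : ℂ) z)
    ((hasDerivAt_id (0 : ℂ)).smul_const w) hz (by simpa using zero_mem_prodBalls β)
  simpa [herm_comm β p z w] using h

end Herm

section Germs
variable {n l l' : ℕ} (β₁ : Fin n → Fin l) (p : Fin l → ℕ) (β₂ : Fin n → Fin l') (q : Fin l' → ℕ)
  (f : (Fin n → ℂ) × ℂ → Fin n → ℂ) (g : (Fin n → ℂ) × ℂ → ℂ)

/-- A normalized holomorphic germ of maps between circle bundles, in logarithmic fibre
coordinates. -/
structure BundleGerm : Prop where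
  diff_fst : ∀ᶠ x in 𝓝 0, DifferentiableAt ℂ f x
  diff_snd : ∀ᶠ x in 𝓝 0, DifferentiableAt ℂ g x
  fst_zero : f 0 = 0
  snd_zero : g 0 = 0
  real : ∀ᶠ x in 𝓝 0, IsRealPt β₁ p x → IsRealPt β₂ q (f x, g x)

/-- The derivative of a germ at the origin in the base directions. -/
def baseDeriv : (Fin n → ℂ) →L[ℂ] (Fin n → ℂ) :=
  (fderiv ℂ f 0).comp (ContinuousLinearMap.inl ℂ (Fin n → ℂ) ℂ)

lemma baseDeriv_apply (z : Fin n → ℂ) :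
    baseDeriv f z = fderiv ℂ f 0 (z, 0) := rfl

namespace BundleGerm
variable {β₁ p β₂ q f g} (h : BundleGerm β₁ p β₂ q f g)
include h

lemma tendsto_fst : Tendsto f (𝓝 0) (𝓝 0) := by
  simpa [h.fst_zero] using h.diff_fst.self_of_nhds.continuousAt.tendsto

lemma diff_star_fst : ∀ᶠ X in 𝓝 0, DifferentiableAt ℂ (fun X => star (f (star X))) X := by
  have ht : Tendsto (star : (Fin n → ℂ) × ℂ → (Fin n → ℂ) × ℂ) (𝓝 0) (𝓝 0) :=
    continuous_star.tendsto' _ _ (star_zero _)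
  filter_upwards [ht.eventually h.diff_fst] with X hX
  simpa using hX.star_star

lemma diff_star_snd : ∀ᶠ X in 𝓝 0, DifferentiableAt ℂ (fun X => conj (g (star X))) X := by
  have ht : Tendsto (star : (Fin n → ℂ) × ℂ → (Fin n → ℂ) × ℂ) (𝓝 0) (𝓝 0) :=
    continuous_star.tendsto' _ _ (star_zero _)
  filter_upwards [ht.eventually h.diff_snd] with X hX
  have := hX.star_star
  rw [star_star] at this
  exact this

lemma eventually_fst_mem : ∀ᶠ x in 𝓝 0, f x ∈ prodBalls β₂ :=
  h.tendsto_fst.eventually (isOpen_prodBalls.mem_nhds (zero_mem_prodBalls β₂))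

lemma eventually_star_fst_mem : ∀ᶠ X in 𝓝 0, star (f (star X)) ∈ prodBalls β₂ := by
  have ht : Tendsto (star : (Fin n → ℂ) × ℂ → (Fin n → ℂ) × ℂ) (𝓝 0) (𝓝 0) :=
    continuous_star.tendsto' _ _ (star_zero _)
  exact (ht.eventually h.eventually_fst_mem).mono fun X hX => star_mem_prodBalls hX

/-- The polarized mapping equation. -/
lemma polarized : ∀ᶠ P in 𝓝 0, OnSegre β₁ p P →
    g P.1 + conj (g (star P.2)) + pot β₂ q (f P.1) (star (f (star P.2))) = 0 := by
  refine eventually_onSegre_imp β₁ p ?_ ?_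
  · have h1 : Tendsto (fun P : ((Fin n → ℂ) × ℂ) × ((Fin n → ℂ) × ℂ) => P.1) (𝓝 0) (𝓝 0) :=
      continuous_fst.tendsto' _ _ rfl
    have h2 : Tendsto (fun P : ((Fin n → ℂ) × ℂ) × ((Fin n → ℂ) × ℂ) => P.2) (𝓝 0) (𝓝 0) :=
      continuous_snd.tendsto' _ _ rfl
    filter_upwards [h1.eventually h.diff_fst, h1.eventually h.diff_snd,
      h2.eventually h.diff_star_fst, h2.eventually h.diff_star_snd,
      h1.eventually h.eventually_fst_mem, h2.eventually h.eventually_star_fst_mem]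
      with P a1 a2 a3 a4 a5 a6
    have b1 : DifferentiableAt ℂ (fun P : ((Fin n → ℂ) × ℂ) × ((Fin n → ℂ) × ℂ) => f P.1) P :=
      a1.comp P differentiableAt_fst
    have b2 : DifferentiableAt ℂ (fun P : ((Fin n → ℂ) × ℂ) × ((Fin n → ℂ) × ℂ) => g P.1) P :=
      a2.comp P differentiableAt_fst
    have b3 : DifferentiableAt ℂ (fun P : ((Fin n → ℂ) × ℂ) × ((Fin n → ℂ) × ℂ) =>
      star (f (star P.2))) P := a3.comp P differentiableAt_snd
    have b4 : DifferentiableAt ℂ (fun P : ((Fin n → ℂ) × ℂ) × ((Fin n → ℂ) × ℂ) =>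
      conj (g (star P.2))) P := a4.comp P differentiableAt_snd
    exact (b2.add b4).add (b1.pot β₂ q b3 a5 a6)
  · filter_upwards [h.real] with x hx hr
    simpa [IsRealPt] using hx hr

lemma snd_apply_zero : ∀ᶠ z in 𝓝 0, g (z, 0) = 0 := by
  have ht : Tendsto (fun z : Fin n → ℂ => ((z, (0 : ℂ)), (0 : (Fin n → ℂ) × ℂ))) (𝓝 0) (𝓝 0) := by
    have : Continuous (fun z : Fin n → ℂ => ((z, (0 : ℂ)), (0 : (Fin n → ℂ) × ℂ))) := by fun_prop
    exact this.tendsto' _ _ rfl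
  filter_upwards [ht.eventually h.polarized] with z hz
  simpa [h.fst_zero, h.snd_zero, OnSegre] using hz

lemma star_snd_apply_zero : ∀ᶠ w in 𝓝 0, conj (g (star (w, 0))) = 0 := by
  have ht : Tendsto (star : (Fin n → ℂ) → (Fin n → ℂ)) (𝓝 0) (𝓝 0) :=
    continuous_star.tendsto' _ _ (star_zero _)
  filter_upwards [ht.eventually h.snd_apply_zero] with w hw
  have : star ((w, 0) : (Fin n → ℂ) × ℂ) = (star w, 0) := by simp [Prod.ext_iff]
  rw [this, hw, map_zero]

/-- The mapping equation on the Segre varieties through the fibre coordinate `0`. -/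
lemma segre_eq : ∀ᶠ P : (Fin n → ℂ) × (Fin n → ℂ) in 𝓝 0,
    g (P.1, -pot β₁ p P.1 P.2) +
      pot β₂ q (f (P.1, -pot β₁ p P.1 P.2)) (star (f (star (P.2, 0)))) = 0 := by
  have hd : DifferentiableAt ℂ (fun P : (Fin n → ℂ) × (Fin n → ℂ) => pot β₁ p P.1 P.2) 0 :=
    DifferentiableAt.pot β₁ p differentiableAt_fst differentiableAt_snd (zero_mem_prodBalls β₁)
      (zero_mem_prodBalls β₁)
  have ht : Tendsto (fun P : (Fin n → ℂ) × (Fin n → ℂ) =>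
      ((P.1, -pot β₁ p P.1 P.2), (P.2, (0 : ℂ)))) (𝓝 0) (𝓝 0) := by
    have : ContinuousAt (fun P : (Fin n → ℂ) × (Fin n → ℂ) =>
      ((P.1, -pot β₁ p P.1 P.2), (P.2, (0 : ℂ)))) 0 :=
      (continuousAt_fst.prodMk hd.continuousAt.neg).prodMk (continuousAt_snd.prodMk
        continuousAt_const)
    simpa [ContinuousAt, ← Prod.zero_eq_mk] using this
  filter_upwards [ht.eventually h.polarized,
    (continuous_snd.tendsto' (0 : (Fin n → ℂ) × (Fin n → ℂ)) 0 rfl).eventually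
      h.star_snd_apply_zero] with P hP hP2
  have := hP (by simp [OnSegre])
  rwa [hP2, add_zero] at this

lemma hasDerivAt_star_fst (w : Fin n → ℂ) :
    HasDerivAt (fun t : ℂ => star (f (star (t • w, 0)))) (star (baseDeriv f (star w))) 0 := by
  have h1 : HasFDerivAt f (fderiv ℂ f 0) 0 := h.diff_fst.self_of_nhds.hasFDerivAt
  have h2 := h1.star_star
  have h3 : HasDerivAt (fun t : ℂ => ((t • w, 0) : (Fin n → ℂ) × ℂ)) (w, 0) 0 := by
    simpa using ((hasDerivAt_id (0 : ℂ)).smul_const w).prodMk (hasDerivAt_const (0 : ℂ) (0 : ℂ))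
  have h4 := h2.hasDerivAt_line h3 (by simp)
  refine h4.congr_deriv ?_
  have : star ((w, 0) : (Fin n → ℂ) × ℂ) = (star w, 0) := by simp [Prod.ext_iff]
  simp [baseDeriv_apply, this]

lemma herm_fst : ∀ᶠ z in 𝓝 0, ∀ w, herm β₂ q (f (z, 0)) (star (baseDeriv f (star w))) =
    fderiv ℂ g (z, 0) (0, 1) * herm β₁ p z w := by
  have hz0 : Tendsto (fun z : Fin n → ℂ => (z, (0 : ℂ))) (𝓝 0) (𝓝 0) := by
    have : Continuous (fun z : Fin n → ℂ => (z, (0 : ℂ))) := by fun_prop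
    exact this.tendsto' _ _ rfl
  filter_upwards [(show ∀ᶠ P : (Fin n → ℂ) × (Fin n → ℂ) in 𝓝 (0, 0), _ from
    h.segre_eq).curry_nhds, hz0.eventually h.diff_fst, hz0.eventually h.diff_snd,
    hz0.eventually h.eventually_fst_mem, isOpen_prodBalls.mem_nhds (zero_mem_prodBalls β₁)]
    with z hz hf hg hfm hzm w
  have hw : Tendsto (fun t : ℂ => t • w) (𝓝 0) (𝓝 0) := by
    have : Continuous (fun t : ℂ => t • w) := by fun_prop
    exact this.tendsto' _ _ (by simp)
  have hcurve : HasDerivAt (fun t : ℂ => (z, -pot β₁ p z (t • w))) (0, -herm β₁ p z w) 0 :=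
    (hasDerivAt_const _ _).prodMk (hasDerivAt_pot_smul β₁ p hzm w).neg
  have h1 := hg.hasFDerivAt.hasDerivAt_line hcurve (by simp)
  have h2 := hf.hasFDerivAt.hasDerivAt_line hcurve (by simp)
  have h3 := h1.add (HasDerivAt.pot β₂ q h2 (h.hasDerivAt_star_fst w) (by simpa using hfm)
    (by simpa [← Prod.zero_eq_mk, h.fst_zero] using zero_mem_prodBalls β₂))
  have h4 : HasDerivAt (fun _ : ℂ => (0 : ℂ)) _ 0 := h3.congr_of_eventuallyEq (by
    filter_upwards [hw.eventually hz] with t ht using ht.symm)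
  have h5 := h4.unique (hasDerivAt_const (0 : ℂ) (0 : ℂ))
  have h6 : fderiv ℂ g (z, 0) (0, -herm β₁ p z w) =
      -herm β₁ p z w * fderiv ℂ g (z, 0) (0, 1) := by
    rw [← smul_eq_mul, ← map_smul]; simp
  rw [h6] at h5
  simp only [zero_smul, pot_zero_right, neg_zero, ← Prod.zero_eq_mk, star_zero, h.fst_zero,
    dpot_zero_mid, dpot_zero_left, zero_add] at h5
  rw [herm_comm]
  linear_combination h5

lemma herm_baseDeriv (z w : Fin n → ℂ) :
    herm β₂ q (baseDeriv f z) (star (baseDeriv f (star w))) =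
      fderiv ℂ g 0 (0, 1) * herm β₁ p z w := by
  have hz : Tendsto (fun t : ℂ => t • z) (𝓝 0) (𝓝 0) := by
    have : Continuous (fun t : ℂ => t • z) := by fun_prop
    exact this.tendsto' _ _ (by simp)
  have h3 : HasDerivAt (fun t : ℂ => ((t • z, 0) : (Fin n → ℂ) × ℂ)) (z, 0) 0 := by
    simpa using ((hasDerivAt_id (0 : ℂ)).smul_const z).prodMk (hasDerivAt_const (0 : ℂ) (0 : ℂ))
  have h1 : HasDerivAt (fun t : ℂ => f (t • z, 0)) (baseDeriv f z) 0 :=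
    h.diff_fst.self_of_nhds.hasFDerivAt.hasDerivAt_line h3 (by simp)
  have h2 := HasDerivAt.herm β₂ q h1
    (hasDerivAt_const (0 : ℂ) (star (baseDeriv f (star w))))
  have h4 : HasDerivAt (fun t : ℂ => fderiv ℂ g (t • z, 0) (0, 1)) _ 0 :=
    (DifferentiableAt.fderiv_apply h.diff_snd (0, 1)).hasFDerivAt.hasDerivAt_line h3 (by simp)
  have h5 := h4.mul (((hasDerivAt_id (0 : ℂ)).mul_const (herm β₁ p z w)))
  have h6 := h2.unique (h5.congr_of_eventuallyEq (by
    filter_upwards [hz.eventually h.herm_fst] with t ht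
    simp [ht w, herm_smul_left]))
  simpa [← Prod.zero_eq_mk] using h6

end BundleGerm
end Germs

lemma tendsto_smul_const_zero {G : Type*} [NormedAddCommGroup G] [NormedSpace ℂ G] (w : G) :
    Tendsto (fun t : ℂ => t • w) (𝓝 0) (𝓝 0) := by
  have : Continuous (fun t : ℂ => t • w) := by fun_prop
  exact this.tendsto' _ _ (by simp)

/-- Second-order expansion of the logarithm. -/
lemma tendsto_neg_log_sub_div_sq :
    Tendsto (fun u : ℂ => (-log (1 - u) - u) / u ^ 2) (𝓝[≠] 0) (𝓝 (1 / 2)) := by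
  have h1 : Tendsto (fun u : ℂ => (log (1 + u) - u + u ^ 2 / 2) / u ^ 2) (𝓝[≠] 0) (𝓝 0) := by
    rw [tendsto_zero_iff_norm_tendsto_zero]
    have hlim : Tendsto (fun u : ℂ => ‖u‖ * (1 - ‖u‖)⁻¹ / 3) (𝓝[≠] 0) (𝓝 0) := by
      have : ContinuousAt (fun u : ℂ => ‖u‖ * (1 - ‖u‖)⁻¹ / 3) 0 := by
        refine ((continuous_norm.continuousAt).mul (ContinuousAt.inv₀ ?_ ?_)).div_const 3
        · fun_prop
        · simp
      simpa [ContinuousAt] using this.tendsto.mono_left nhdsWithin_le_nhds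
    refine squeeze_zero' (Eventually.of_forall fun _ => norm_nonneg _) ?_ hlim
    filter_upwards [self_mem_nhdsWithin,
      nhdsWithin_le_nhds (Metric.ball_mem_nhds (0 : ℂ) one_pos)] with u hu hu1
    have hu0 : 0 < ‖u‖ := norm_pos_iff.2 hu
    have := norm_log_sub_logTaylor_le 2 (z := u) (by simpa using hu1)
    have h2 : logTaylor 3 u = u - u ^ 2 / 2 := by
      simp [logTaylor, Finset.sum_range_succ]; ring
    rw [h2] at this
    rw [norm_div, norm_pow, div_le_iff₀ (by positivity)]
    calc ‖log (1 + u) - u + u ^ 2 / 2‖ = ‖log (1 + u) - (u - u ^ 2 / 2)‖ := by congr 1; ring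
      _ ≤ _ := this
      _ = _ := by push_cast; ring
  have h2 : Tendsto (fun u : ℂ => -u) (𝓝[≠] 0) (𝓝[≠] 0) := by
    refine tendsto_nhdsWithin_iff.2 ⟨?_, ?_⟩
    · exact (continuous_neg.tendsto' 0 0 (by simp)).mono_left nhdsWithin_le_nhds
    · filter_upwards [self_mem_nhdsWithin] with t ht
      simpa using ht
  have h3 := (h1.comp h2).const_sub (1 / 2)
  rw [sub_zero] at h3
  refine h3.congr' ?_
  filter_upwards [self_mem_nhdsWithin] with u hu
  have hu : u ≠ 0 := hu
  simp only [Function.comp]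
  rw [← sub_eq_add_neg]
  field_simp
  ring

/-- Second-order behaviour of `-log (1 - u)` along a curve through `0`. -/
lemma tendsto_neg_log_sub_div_sq_of_hasDerivAt {u : ℂ → ℂ} {b : ℂ} (hu : HasDerivAt u b 0)
    (h0 : u 0 = 0) :
    Tendsto (fun t => (-log (1 - u t) - u t) / t ^ 2) (𝓝[≠] 0) (𝓝 (b ^ 2 / 2)) := by
  set k : ℂ → ℂ := Function.update (fun u : ℂ => (-log (1 - u) - u) / u ^ 2) 0 (1 / 2) with hk
  have hkc : ContinuousAt k 0 := continuousAt_update_same.2 tendsto_neg_log_sub_div_sq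
  have hkeq : ∀ v, -log (1 - v) - v = v ^ 2 * k v := by
    intro v
    rcases eq_or_ne v 0 with rfl | hv
    · simp
    · rw [hk, Function.update_of_ne hv]; field_simp
  have hut : Tendsto u (𝓝[≠] 0) (𝓝 0) := by
    simpa [h0] using hu.continuousAt.tendsto.mono_left nhdsWithin_le_nhds
  have h1 : Tendsto (fun t => k (u t)) (𝓝[≠] 0) (𝓝 (1 / 2)) := by
    have hk0 : k 0 = 1 / 2 := by simp [hk]
    have := hkc.tendsto.comp hut
    rw [hk0] at this
    exact this
  have h2 : Tendsto (fun t => u t / t) (𝓝[≠] 0) (𝓝 b) := by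
    have := hasDerivAt_iff_tendsto_slope.1 hu
    refine this.congr fun t => ?_
    simp [slope_def_field, h0]
  have h3 := (h2.pow 2).mul h1
  rw [mul_one_div] at h3
  refine h3.congr fun t => ?_
  rw [hkeq]; ring

section
variable {n l : ℕ} (β : Fin n → Fin l) (p : Fin l → ℕ)

/-- Second-order behaviour of the potential. -/
lemma tendsto_pot_sub_herm_div_sq {u v : ℂ → Fin n → ℂ} {v' : Fin n → ℂ} (hu : ContinuousAt u 0)
    (hv : HasDerivAt v v' 0) (h0 : v 0 = 0) :
    Tendsto (fun t => (pot β p (u t) (v t) - herm β p (u t) (v t)) / t ^ 2) (𝓝[≠] 0)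
      (𝓝 (quart β p (u 0) v' / 2)) := by
  have key : ∀ i, Tendsto (fun t => (-log (1 - bil β i (u t) (v t)) - bil β i (u t) (v t)) / t ^ 2)
      (𝓝[≠] 0) (𝓝 (bil β i (u 0) v' ^ 2 / 2)) := by
    intro i
    refine tendsto_neg_log_sub_div_sq_of_hasDerivAt ?_ (by simp [h0])
    rw [hasDerivAt_iff_tendsto_slope]
    have h1 : Tendsto (fun t : ℂ => t⁻¹ • v t) (𝓝[≠] 0) (𝓝 v') := by
      have := hasDerivAt_iff_tendsto_slope.1 hv
      refine this.congr fun t => ?_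
      simp [slope_def_module, h0]
    have h2 : Tendsto u (𝓝[≠] 0) (𝓝 (u 0)) := hu.tendsto.mono_left nhdsWithin_le_nhds
    have h3 : Continuous fun P : (Fin n → ℂ) × (Fin n → ℂ) => bil β i P.1 P.2 := by fun_prop
    have h4 := (h3.tendsto (u 0, v')).comp (h2.prodMk_nhds h1)
    refine h4.congr fun t => ?_
    simp [slope_def_field, h0, bil_smul_right]
    ring
  have hsum := tendsto_finsetSum Finset.univ fun i (_ : i ∈ Finset.univ) =>
    (key i).const_mul (p i : ℂ)
  have e1 : quart β p (u 0) v' / 2 = ∑ i, (p i : ℂ) * (bil β i (u 0) v' ^ 2 / 2) := by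
    simp only [quart, Finset.sum_div]
    exact Finset.sum_congr rfl fun _ _ => by ring
  rw [e1]
  refine hsum.congr fun t => ?_
  simp only [pot, herm, ← Finset.sum_neg_distrib, ← Finset.sum_sub_distrib, Finset.sum_div]
  exact Finset.sum_congr rfl fun _ _ => by ring

end

namespace BundleGerm
variable {n l l' : ℕ} {β₁ : Fin n → Fin l} {p : Fin l → ℕ} {β₂ : Fin n → Fin l'} {q : Fin l' → ℕ}
  {f : (Fin n → ℂ) × ℂ → Fin n → ℂ} {g : (Fin n → ℂ) × ℂ → ℂ}
  (h : BundleGerm β₁ p β₂ q f g)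
include h

lemma sum_blockSq_baseDeriv (z : Fin n → ℂ) :
    ((∑ j, (q j : ℝ) * blockSq β₂ j (baseDeriv f z) : ℝ) : ℂ) =
      fderiv ℂ g 0 (0, 1) * ((∑ i, (p i : ℝ) * blockSq β₁ i z : ℝ) : ℂ) := by
  have := h.herm_baseDeriv z (star z)
  rwa [star_star, herm_self_star, herm_self_star] at this

lemma exists_scale (hn : 1 ≤ n) (hp : ∀ i, 0 < p i) :
    ∃ r : ℝ, 0 ≤ r ∧ fderiv ℂ g 0 (0, 1) = r := by
  have hs := h.sum_blockSq_baseDeriv (Pi.single ⟨0, hn⟩ 1)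
  set X := ∑ j, (q j : ℝ) * blockSq β₂ j (baseDeriv f (Pi.single ⟨0, hn⟩ 1))
  set Y := ∑ i, (p i : ℝ) * blockSq β₁ i (Pi.single ⟨0, hn⟩ 1)
  have hX : 0 ≤ X := Finset.sum_nonneg fun j _ => mul_nonneg (by positivity) (blockSq_nonneg _ _ _)
  have hY : 0 < Y := by
    refine Finset.sum_pos' (fun j _ => mul_nonneg (by positivity) (blockSq_nonneg _ _ _))
      ⟨β₁ ⟨0, hn⟩, Finset.mem_univ _, mul_pos (by exact_mod_cast hp _) ?_⟩
    refine Finset.sum_pos' (fun j _ => normSq_nonneg _) ⟨⟨0, hn⟩, by simp, by simp⟩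
  refine ⟨X / Y, by positivity, ?_⟩
  have hY' : (Y : ℂ) ≠ 0 := by exact_mod_cast hY.ne'
  rw [ofReal_div, eq_div_iff hY', hs]

lemma baseDeriv_eq_zero (hq : ∀ j, 0 < q j) (h0 : fderiv ℂ g 0 (0, 1) = 0) : baseDeriv f = 0 := by
  ext z k
  have hs := h.sum_blockSq_baseDeriv z
  rw [h0, zero_mul, ofReal_eq_zero, Finset.sum_eq_zero_iff_of_nonneg fun j _ =>
    mul_nonneg (by positivity) (blockSq_nonneg _ _ _)] at hs
  have h1 := hs (β₂ k) (Finset.mem_univ _)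
  have h2 : (q (β₂ k) : ℝ) ≠ 0 := by exact_mod_cast (hq _).ne'
  have h3 := (mul_eq_zero.1 h1).resolve_left h2
  rw [blockSq, Finset.sum_eq_zero_iff_of_nonneg fun j _ => normSq_nonneg _] at h3
  have := h3 k (by simp)
  simpa using this

lemma baseDeriv_injective (hp : ∀ i, 0 < p i) (h0 : fderiv ℂ g 0 (0, 1) ≠ 0) :
    Function.Injective (baseDeriv f) := by
  refine (injective_iff_map_eq_zero _).2 fun z hz => eq_zero_of_herm_eq_zero β₁ p hp fun w => ?_
  have := h.herm_baseDeriv z w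
  rw [hz, herm_zero_left] at this
  exact (mul_eq_zero.1 this.symm).resolve_left h0

lemma baseDeriv_surjective (hp : ∀ i, 0 < p i) (h0 : fderiv ℂ g 0 (0, 1) ≠ 0) :
    Function.Surjective (baseDeriv f) :=
  LinearMap.injective_iff_surjective (f := (baseDeriv f).toLinearMap).1
    (h.baseDeriv_injective hp h0)

lemma eq_zero_of_herm_baseDeriv (hp : ∀ i, 0 < p i) (hq : ∀ j, 0 < q j)
    (h0 : fderiv ℂ g 0 (0, 1) ≠ 0) {u : Fin n → ℂ}
    (hu : ∀ w, herm β₂ q u (star (baseDeriv f (star w))) = 0) : u = 0 := by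
  refine eq_zero_of_herm_eq_zero β₂ q hq fun w => ?_
  obtain ⟨v, hv⟩ := h.baseDeriv_surjective hp h0 (star w)
  have := hu (star v)
  rwa [star_star, hv, star_star] at this

lemma fst_apply_zero (hp : ∀ i, 0 < p i) (hq : ∀ j, 0 < q j) (h0 : fderiv ℂ g 0 (0, 1) ≠ 0) :
    ∀ᶠ z in 𝓝 0, f (z, 0) =
      (fderiv ℂ g (z, 0) (0, 1) / fderiv ℂ g 0 (0, 1)) • baseDeriv f z := by
  filter_upwards [h.herm_fst] with z hz
  rw [← sub_eq_zero]
  refine h.eq_zero_of_herm_baseDeriv hp hq h0 fun w => ?_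
  rw [herm_sub_left, herm_smul_left, hz w, h.herm_baseDeriv]
  field_simp
  ring

lemma quart_baseDeriv (hp : ∀ i, 0 < p i) (hq : ∀ j, 0 < q j) (h0 : fderiv ℂ g 0 (0, 1) ≠ 0)
    {z w : Fin n → ℂ} (hzw : herm β₁ p z w = 0) :
    quart β₂ q (baseDeriv f z) (star (baseDeriv f (star w))) =
      fderiv ℂ g 0 (0, 1) * quart β₁ p z w := by
  set lam := fderiv ℂ g 0 (0, 1) with hlam
  have hz0 : Tendsto (fun z : Fin n → ℂ => (z, (0 : ℂ))) (𝓝 0) (𝓝 0) := by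
    have : Continuous (fun z : Fin n → ℂ => (z, (0 : ℂ))) := by fun_prop
    exact this.tendsto' _ _ rfl
  have hstar : Tendsto (star : (Fin n → ℂ) → (Fin n → ℂ)) (𝓝 0) (𝓝 0) :=
    continuous_star.tendsto' _ _ (star_zero _)
  -- the identity for small `z`, with the conformal factor
  have hsmall : ∀ᶠ z in 𝓝 0, herm β₁ p z w = 0 →
      fderiv ℂ g (z, 0) (0, 1) * quart β₁ p z w =
        (fderiv ℂ g (z, 0) (0, 1) / lam) ^ 2 *
          quart β₂ q (baseDeriv f z) (star (baseDeriv f (star w))) := by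
    filter_upwards [(show ∀ᶠ P : (Fin n → ℂ) × (Fin n → ℂ) in 𝓝 (0, 0), _ from
      h.segre_eq).curry_nhds, hz0.eventually h.diff_fst, hz0.eventually h.diff_snd,
      h.fst_apply_zero hp hq h0, h.snd_apply_zero,
      isOpen_prodBalls.mem_nhds (zero_mem_prodBalls β₁)]
      with z hz hf hg hf0 hg0 hzm hH
    set c := fderiv ℂ g (z, 0) (0, 1) / lam with hc
    have hpot := hasDerivAt_pot_smul β₁ p hzm w
    have hcurve : HasDerivAt (fun t : ℂ => (z, -pot β₁ p z (t • w))) (0, -herm β₁ p z w) 0 :=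
      (hasDerivAt_const _ _).prodMk hpot.neg
    have h2 := hf.hasFDerivAt.hasDerivAt_line hcurve (by simp)
    have hv := h.hasDerivAt_star_fst w
    have hv0 : star (f (star ((0 : ℂ) • w, 0))) = 0 := by
      simp [← Prod.zero_eq_mk, h.fst_zero]
    -- the potential of the source
    have L1 : Tendsto (fun t : ℂ => pot β₁ p z (t • w) / t ^ 2) (𝓝[≠] 0)
        (𝓝 (quart β₁ p z w / 2)) := by
      have := tendsto_pot_sub_herm_div_sq β₁ p (u := fun _ => z) (v := fun t => t • w) (v' := w)
        continuousAt_const (by simpa using (hasDerivAt_id (0 : ℂ)).smul_const w) (by simp)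
      refine this.congr fun t => ?_
      simp [herm_smul_right, hH]
    -- the fibre component
    have L2 : Tendsto (fun t : ℂ => g (z, -pot β₁ p z (t • w)) / t ^ 2) (𝓝[≠] 0)
        (𝓝 (fderiv ℂ g (z, 0) (0, 1) * -(quart β₁ p z w / 2))) := by
      have hg1 : HasDerivAt (fun x : ℂ => g (z, x)) (fderiv ℂ g (z, 0) (0, 1)) 0 :=
        hg.hasFDerivAt.hasDerivAt_line ((hasDerivAt_const _ _).prodMk (hasDerivAt_id _)) rfl
      have hds : ContinuousAt (dslope (fun x : ℂ => g (z, x)) 0) 0 :=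
        continuousAt_dslope_same.2 hg1.differentiableAt
      have hp0 : Tendsto (fun t : ℂ => -pot β₁ p z (t • w)) (𝓝[≠] 0) (𝓝 0) := by
        have := hpot.continuousAt.tendsto.mono_left (nhdsWithin_le_nhds (s := {0}ᶜ))
        simpa using this.neg
      have h3 := (hds.tendsto.comp hp0).mul L1.neg
      rw [dslope_same, hg1.deriv] at h3
      refine h3.congr fun t => ?_
      have h4 := sub_smul_dslope (fun x : ℂ => g (z, x)) 0 (-pot β₁ p z (t • w))
      simp only [sub_zero, smul_eq_mul, hg0] at h4
      simp only [Function.comp]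
      rw [← h4]
      ring
    -- the linear part of the potential of the target
    have L3 : Tendsto (fun t : ℂ => herm β₂ q (f (z, -pot β₁ p z (t • w)))
        (star (f (star (t • w, 0)))) / t ^ 2) (𝓝[≠] 0) (𝓝 0) := by
      have s1 : Tendsto (fun t : ℂ => t⁻¹ • (f (z, -pot β₁ p z (t • w)) - f (z, 0))) (𝓝[≠] 0)
          (𝓝 0) := by
        have := hasDerivAt_iff_tendsto_slope.1 h2
        rw [hH, neg_zero, ← Prod.zero_eq_mk, map_zero] at this
        refine this.congr fun t => ?_
        simp [slope_def_module]
      have s2 : Tendsto (fun t : ℂ => t⁻¹ • star (f (star (t • w, 0)))) (𝓝[≠] 0)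
          (𝓝 (star (baseDeriv f (star w)))) := by
        have := hasDerivAt_iff_tendsto_slope.1 hv
        refine this.congr fun t => ?_
        rw [slope_def_module, hv0]; simp
      have s3 : Continuous fun P : (Fin n → ℂ) × (Fin n → ℂ) => herm β₂ q P.1 P.2 := by
        unfold herm; fun_prop
      have s4 := (s3.tendsto _).comp (s1.prodMk_nhds s2)
      rw [herm_zero_left] at s4
      refine s4.congr' ?_
      filter_upwards [nhdsWithin_le_nhds ((hstar.comp
        (tendsto_smul_const_zero w)).eventually (h.fst_apply_zero hp hq h0))] with t ht
      have s5 : star ((t • w, 0) : (Fin n → ℂ) × ℂ) = (star (t • w), 0) := by simp [Prod.ext_iff]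
      have s6 : herm β₂ q (f (z, 0)) (star (f (star (t • w, 0)))) = 0 := by
        simp only [Function.comp] at ht
        rw [s5, ht, star_smul (R := ℂ) (A := Fin n → ℂ), hf0, herm_smul_right, herm_smul_left,
          star_smul, map_smul, star_smul, herm_smul_right, h.herm_baseDeriv, hH]
        simp
      simp only [Function.comp, herm_smul_left, herm_smul_right, herm_sub_left, s6]
      ring
    have L4 := tendsto_pot_sub_herm_div_sq β₂ q
      (u := fun t : ℂ => f (z, -pot β₁ p z (t • w))) h2.continuousAt hv hv0
    have L5 := (L2.add L3).add L4
    have L6 : Tendsto (fun _ : ℂ => (0 : ℂ)) (𝓝[≠] (0 : ℂ)) (𝓝 _) := L5.congr' (by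
      filter_upwards [nhdsWithin_le_nhds ((tendsto_smul_const_zero w).eventually hz)] with t ht
      rw [← add_div, ← add_div]
      rw [show ∀ a b c : ℂ, a + b + (c - b) = a + c from fun a b c => by ring, ht, zero_div])
    have L7 := tendsto_nhds_unique L6 tendsto_const_nhds
    simp only [zero_smul, pot_zero_right, neg_zero, hf0, quart_smul_left] at L7
    linear_combination -2 * L7
  have hcont : Tendsto (fun s : ℂ => fderiv ℂ g (s • z, 0) (0, 1)) (𝓝[≠] 0) (𝓝 lam) := by
    have h1 := (DifferentiableAt.fderiv_apply h.diff_snd (0, 1)).continuousAt.tendsto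
    exact (h1.comp (hz0.comp (tendsto_smul_const_zero z))).mono_left nhdsWithin_le_nhds
  have hA : Tendsto (fun s : ℂ => fderiv ℂ g (s • z, 0) (0, 1) / lam ^ 2 *
      quart β₂ q (baseDeriv f z) (star (baseDeriv f (star w)))) (𝓝[≠] 0)
      (𝓝 (quart β₁ p z w)) := by
    refine tendsto_const_nhds.congr' ?_
    filter_upwards [nhdsWithin_le_nhds ((tendsto_smul_const_zero z).eventually hsmall),
      hcont.eventually_ne h0, self_mem_nhdsWithin] with s hs hs1 hs0
    have hs0 : s ≠ 0 := hs0
    have h1 := hs (by rw [herm_smul_left, hzw, mul_zero])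
    rw [map_smul, quart_smul_left, quart_smul_left] at h1
    have h2 : fderiv ℂ g (s • z, 0) (0, 1) * s ^ 2 ≠ 0 := mul_ne_zero hs1 (pow_ne_zero _ hs0)
    refine mul_left_cancel₀ h2 ?_
    linear_combination h1
  have := tendsto_nhds_unique hA ((hcont.div_const (lam ^ 2)).mul_const _)
  rw [this]
  field_simp

end BundleGerm

section Symbol
/-- A linear map that rescales the weighted Hermitian form by `r`, and the quartic form on pairs
of orthogonal vectors by the same factor. -/
structure SymbolMap {n l l' : ℕ} (β₁ : Fin n → Fin l) (p : Fin l → ℕ) (β₂ : Fin n → Fin l')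
    (q : Fin l' → ℕ) (A : (Fin n → ℂ) →ₗ[ℂ] (Fin n → ℂ)) (r : ℝ) : Prop where
  pos : 0 < r
  map_herm : ∀ z w, herm β₂ q (A z) (star (A w)) = r * herm β₁ p z (star w)
  map_quart : ∀ z w, herm β₁ p z (star w) = 0 →
    quart β₂ q (A z) (star (A w)) = r * quart β₁ p z (star w)

namespace SymbolMap
variable {n l l' l'' : ℕ} {β₁ : Fin n → Fin l} {p : Fin l → ℕ} {β₂ : Fin n → Fin l'} {q : Fin l' → ℕ}
  {β₃ : Fin n → Fin l''} {m : Fin l'' → ℕ}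
  {A A' B : (Fin n → ℂ) →ₗ[ℂ] (Fin n → ℂ)} {r r' s : ℝ}

lemma comp (hB : SymbolMap β₂ q β₃ m B s) (hA : SymbolMap β₁ p β₂ q A r) :
    SymbolMap β₁ p β₃ m (B ∘ₗ A) (s * r) where
  pos := mul_pos hB.pos hA.pos
  map_herm z w := by
    simp only [LinearMap.comp_apply, hB.map_herm, hA.map_herm]; push_cast; ring
  map_quart z w h := by
    have h1 : herm β₂ q (A z) (star (A w)) = 0 := by rw [hA.map_herm, h, mul_zero]
    simp only [LinearMap.comp_apply, hB.map_quart _ _ h1, hA.map_quart _ _ h]; push_cast; ring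

lemma exists_inverse (hp : ∀ i, 0 < p i) (hA : SymbolMap β₁ p β₂ q A r) :
    ∃ B, SymbolMap β₂ q β₁ p B r⁻¹ ∧ ∀ z, A (B z) = z := by
  have hr : (r : ℂ) ≠ 0 := ofReal_ne_zero.2 hA.pos.ne'
  have hinj : Function.Injective A := by
    refine (injective_iff_map_eq_zero _).2 fun z hz => eq_zero_of_herm_eq_zero β₁ p hp fun w => ?_
    have := hA.map_herm z (star w)
    rw [hz, herm_zero_left, star_star] at this
    exact (mul_eq_zero.1 this.symm).resolve_left hr
  let e := LinearEquiv.ofBijective A ⟨hinj, LinearMap.injective_iff_surjective.1 hinj⟩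
  have he : ∀ z, A (e.symm z) = z := e.apply_symm_apply
  have hh : ∀ z w, herm β₁ p (e.symm z) (star (e.symm w)) = (r : ℂ)⁻¹ * herm β₂ q z (star w) := by
    intro z w
    have := hA.map_herm (e.symm z) (e.symm w)
    rw [he, he] at this
    rw [this]; field_simp
  refine ⟨e.symm, ⟨inv_pos.2 hA.pos, fun z w => ?_, fun z w h => ?_⟩, he⟩
  · rw [ofReal_inv]; exact hh z w
  · have h1 : herm β₁ p (e.symm z) (star (e.symm w)) = 0 := by rw [hh, h, mul_zero]
    have := hA.map_quart _ _ h1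
    rw [he, he] at this
    rw [this, ofReal_inv, LinearEquiv.coe_coe]; field_simp

lemma norm_quart_le (hp : ∀ i, 0 < p i) (z w : Fin n → ℂ) :
    ‖quart β₁ p z (star w)‖ ≤ ‖herm β₁ p z (star z)‖ * ‖herm β₁ p w (star w)‖ := by
  have hnn : ∀ z, 0 ≤ ∑ i, (p i : ℝ) * blockSq β₁ i z := fun z =>
    Finset.sum_nonneg fun i _ => mul_nonneg (by positivity) (blockSq_nonneg _ _ _)
  rw [herm_self_star, herm_self_star, Complex.norm_of_nonneg (hnn z), Complex.norm_of_nonneg (hnn w)]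
  refine (norm_sum_le _ _).trans ?_
  calc ∑ i, ‖(p i : ℂ) * bil β₁ i z (star w) ^ 2‖
      ≤ ∑ i, ((p i : ℝ) * blockSq β₁ i z) * ((p i : ℝ) * blockSq β₁ i w) := by
        refine Finset.sum_le_sum fun i _ => ?_
        have h1 := normSq_bil_le β₁ i z (star w)
        rw [blockSq_star, normSq_eq_norm_sq] at h1
        have h2 : (1 : ℝ) ≤ p i := by exact_mod_cast hp i
        rw [norm_mul, norm_pow, Complex.norm_natCast]
        have h3 := mul_nonneg (blockSq_nonneg β₁ i z) (blockSq_nonneg β₁ i w)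
        calc (p i : ℝ) * ‖bil β₁ i z (star w)‖ ^ 2
            ≤ p i * (blockSq β₁ i z * blockSq β₁ i w) := by gcongr
          _ ≤ p i * (p i * (blockSq β₁ i z * blockSq β₁ i w)) := by
              exact mul_le_mul_of_nonneg_left (le_mul_of_one_le_left h3 h2) (by positivity)
          _ = _ := by ring
    _ ≤ ∑ i, ((p i : ℝ) * blockSq β₁ i z) * ∑ j, (p j : ℝ) * blockSq β₁ j w := by
        refine Finset.sum_le_sum fun i _ => mul_le_mul_of_nonneg_left ?_
          (mul_nonneg (by positivity) (blockSq_nonneg _ _ _))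
        exact Finset.single_le_sum (f := fun j => (p j : ℝ) * blockSq β₁ j w)
          (fun j _ => mul_nonneg (by positivity) (blockSq_nonneg _ _ _)) (Finset.mem_univ i)
    _ = _ := by rw [Finset.sum_mul]

lemma pow (hA : SymbolMap β₁ p β₁ p A r) (k : ℕ) : SymbolMap β₁ p β₁ p (A ^ k) (r ^ k) := by
  induction k with
  | zero => exact ⟨by simp, by simp, by simp⟩
  | succ k ih => rw [pow_succ, pow_succ]; exact ih.comp hA

lemma one_le (hl : 2 ≤ l) (hβ : Function.Surjective β₁) (hp : ∀ i, 0 < p i)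
    (hA : SymbolMap β₁ p β₁ p A r) : 1 ≤ r := by
  by_contra! hr
  obtain ⟨a, ha⟩ := hβ ⟨0, by omega⟩
  obtain ⟨b, hb⟩ := hβ ⟨1, by omega⟩
  have hne : β₁ b ≠ β₁ a := by rw [ha, hb]; simp
  have hab : b ≠ a := fun h => hne (h ▸ rfl)
  set z : Fin n → ℂ := Pi.single a 1 + Pi.single b 1
  set w : Fin n → ℂ := (p (β₁ b) : ℂ) • Pi.single a 1 + (-(p (β₁ a) : ℂ)) • Pi.single b 1
  have hsingle : ∀ i (c : Fin n) (v : Fin n → ℂ),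
      bil β₁ i (Pi.single c 1) v = if β₁ c = i then v c else 0 := by
    intro i c v
    simp [bil, Pi.single_apply]
  have hbil : ∀ i, bil β₁ i z (star w) =
      (if β₁ a = i then (p (β₁ b) : ℂ) else 0) - if β₁ b = i then (p (β₁ a) : ℂ) else 0 := by
    intro i
    simp [z, w, bil_add_left, hsingle, hab, hab.symm]
    split_ifs <;> ring
  have hH : herm β₁ p z (star w) = 0 := by
    simp only [herm, hbil, mul_sub, Finset.sum_sub_distrib, mul_ite, mul_zero, Finset.sum_ite_eq,
      Finset.mem_univ, if_true]
    ring
  have hQ : quart β₁ p z (star w) =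
      ((p (β₁ a) * p (β₁ b) ^ 2 + p (β₁ b) * p (β₁ a) ^ 2 : ℕ) : ℂ) := by
    have : ∀ i, (p i : ℂ) * bil β₁ i z (star w) ^ 2 =
        (if β₁ a = i then (p i : ℂ) * (p (β₁ b) : ℂ) ^ 2 else 0) +
          if β₁ b = i then (p i : ℂ) * (p (β₁ a) : ℂ) ^ 2 else 0 := by
      intro i
      rw [hbil]
      by_cases h1 : β₁ a = i
      · have h2 : β₁ b ≠ i := h1 ▸ hne
        simp [h1, h2]
      · simp [h1]
    simp only [quart, this, Finset.sum_add_distrib, Finset.sum_ite_eq, Finset.mem_univ, if_true]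
    push_cast; ring
  have hQ0 : 0 < ‖quart β₁ p z (star w)‖ := by
    rw [hQ, Complex.norm_natCast]
    have := hp (β₁ a); have := hp (β₁ b)
    positivity
  have hbound : ∀ k : ℕ, ‖quart β₁ p z (star w)‖ ≤
      r ^ k * (‖herm β₁ p z (star z)‖ * ‖herm β₁ p w (star w)‖) := by
    intro k
    have hk := hA.pow k
    have h1 := norm_quart_le (β₁ := β₁) (p := p) hp ((A ^ k) z) ((A ^ k) w)
    rw [hk.map_quart z w hH, hk.map_herm, hk.map_herm, norm_mul, norm_mul, norm_mul,
      Complex.norm_of_nonneg hk.pos.le] at h1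
    refine le_of_mul_le_mul_left (h1.trans_eq ?_) hk.pos
    ring
  have hlim : Tendsto (fun k : ℕ => r ^ k * (‖herm β₁ p z (star z)‖ * ‖herm β₁ p w (star w)‖))
      atTop (𝓝 0) := by
    simpa using (tendsto_pow_atTop_nhds_zero_of_lt_one hA.pos.le hr).mul_const _
  exact absurd (ge_of_tendsto' hlim hbound) (not_le.2 hQ0)

/-- In rank at least two, the scale of a symbol map is unique. -/
lemma scale_unique (hβ₁ : Function.Surjective β₁) (hβ₂ : Function.Surjective β₂)
    (hp : ∀ i, 0 < p i) (hq : ∀ j, 0 < q j) (hrank : 2 ≤ l ∨ 2 ≤ l')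
    (hA : SymbolMap β₁ p β₂ q A r) (hA' : SymbolMap β₁ p β₂ q A' r') : r = r' := by
  have key : ∀ {A A' : (Fin n → ℂ) →ₗ[ℂ] (Fin n → ℂ)} {r r' : ℝ}, SymbolMap β₁ p β₂ q A r →
      SymbolMap β₁ p β₂ q A' r' → r' ≤ r := by
    intro A A' r r' hA hA'
    obtain ⟨B, hB, -⟩ := hA'.exists_inverse hp
    have h1 : 1 ≤ r'⁻¹ * r := by
      rcases hrank with hl | hl
      · exact one_le hl hβ₁ hp (hB.comp hA)
      · rw [mul_comm]; exact one_le hl hβ₂ hq (hA.comp hB)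
    rwa [inv_mul_eq_div, one_le_div hA'.pos] at h1
  exact le_antisymm (key hA' hA) (key hA hA')

end SymbolMap

lemma BundleGerm.symbolMap {β₁ : Fin n → Fin l} {p : Fin l → ℕ} {β₂ : Fin n → Fin l'}
    {q : Fin l' → ℕ} {f : (Fin n → ℂ) × ℂ → Fin n → ℂ} {g : (Fin n → ℂ) × ℂ → ℂ}
    (h : BundleGerm β₁ p β₂ q f g) (hn : 1 ≤ n) (hp : ∀ i, 0 < p i) (hq : ∀ j, 0 < q j)
    (h0 : fderiv ℂ g 0 (0, 1) ≠ 0) :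
    ∃ r : ℝ, fderiv ℂ g 0 (0, 1) = r ∧ SymbolMap β₁ p β₂ q (baseDeriv f).toLinearMap r := by
  obtain ⟨r, hr, hr'⟩ := h.exists_scale hn hp
  refine ⟨r, hr', lt_of_le_of_ne hr ?_, fun z w => ?_, fun z w hzw => ?_⟩
  · rintro rfl; exact h0 (by simpa using hr')
  · rw [← hr']
    simpa using h.herm_baseDeriv z (star w)
  · rw [← hr']
    simpa using h.quart_baseDeriv hp hq h0 hzw

end Symbol

lemma hasDerivAt_inr {n : ℕ} : HasDerivAt (fun t : ℂ => ((0, t) : (Fin n → ℂ) × ℂ)) (0, 1) 0 :=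
  (hasDerivAt_const _ _).prodMk (hasDerivAt_id _)

section LogShift
variable {n l : ℕ} (β : Fin n → Fin l) (p : Fin l → ℕ)

/-- The lift of the involution `mob β a` to the line bundle, in logarithmic fibre coordinates. -/
def logShift (a : Fin n → ℂ) (c : ℂ) (x : (Fin n → ℂ) × ℂ) : (Fin n → ℂ) × ℂ :=
  (mob β a x.1, x.2 + c + pot β p x.1 (star a))

variable {β p} {a z : Fin n → ℂ}

lemma pot_mob_star (ha : a ∈ prodBalls β) (hz : z ∈ prodBalls β) :
    pot β p (mob β a z) (star a) = pot β p a (star a) - pot β p z (star a) := by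
  simp only [pot, one_sub_bil_mob_star ha hz, bil_self_star]
  rw [neg_sub_neg, ← neg_sub, ← Finset.sum_sub_distrib]
  congr 1
  refine Finset.sum_congr rfl fun i _ => ?_
  have h1 := one_sub_mem_slitPlane (norm_bil_lt_one i hz (star_mem_prodBalls ha))
  have h2 : 0 < 1 - blockSq β i a := sub_pos.2 (ha i)
  rw [div_eq_mul_inv, show (1 - (blockSq β i a : ℂ)) = ((1 - blockSq β i a : ℝ) : ℂ) by push_cast; rfl,
    log_ofReal_mul h2 (inv_ne_zero (slitPlane_ne_zero h1)), log_inv _ (slitPlane_arg_ne_pi h1),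
    ofReal_log h2.le]
  ring

lemma pot_mob_self (ha : a ∈ prodBalls β) (hz : z ∈ prodBalls β) :
    pot β p (mob β a z) (star (mob β a z)) = pot β p a (star a) + pot β p z (star z)
      - pot β p z (star a) - conj (pot β p z (star a)) := by
  have h1 := polNorm_ne_zero p hz (star_mem_prodBalls ha)
  rw [pot_self_star p (mob_mem ha hz), pot_self_star p ha, pot_self_star p hz, gnorm_mob ha hz,
    Real.log_div (mul_pos (gnorm_pos p ha) (gnorm_pos p hz)).ne' (normSq_pos.2 h1).ne',
    Real.log_mul (gnorm_pos p ha).ne' (gnorm_pos p hz).ne',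
    ← exp_neg_pot p hz (star_mem_prodBalls ha), normSq_eq_norm_sq, norm_exp, ← Real.exp_nat_mul,
    Real.log_exp]
  have h2 := add_conj (pot β p z (star a))
  rw [sub_sub, h2]
  push_cast
  simp
  ring

lemma isRealPt_logShift (ha : a ∈ prodBalls β) {c : ℂ} (hc : IsRealPt β p (a, c))
    {x : (Fin n → ℂ) × ℂ} (hx1 : x.1 ∈ prodBalls β) (hx : IsRealPt β p x) :
    IsRealPt β p (logShift β p a c x) := by
  simp only [IsRealPt, logShift, map_add, pot_mob_self ha hx1] at *
  linear_combination hc + hx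

lemma logShift_logShift (ha : a ∈ prodBalls β) {c c' : ℂ} (hc : c + c' + pot β p a (star a) = 0)
    {x : (Fin n → ℂ) × ℂ} (hx : x.1 ∈ prodBalls β) :
    logShift β p a c (logShift β p a c' x) = x := by
  refine Prod.ext (mob_mob ha hx) ?_
  simp only [logShift, pot_mob_star ha hx]
  linear_combination hc

lemma logShift_zero (c : ℂ) : logShift β p a c 0 = (a, c) := by
  simp [logShift, mob_zero]

lemma logShift_self (ha : a ∈ prodBalls β) {c c' : ℂ} (hc : c + c' + pot β p a (star a) = 0) :
    logShift β p a c (a, c') = 0 := by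
  have := logShift_logShift (p := p) ha hc (x := 0) (zero_mem_prodBalls β)
  rwa [logShift_zero] at this

lemma differentiableAt_logShift (ha : a ∈ prodBalls β) (c : ℂ) {x : (Fin n → ℂ) × ℂ}
    (hx : x.1 ∈ prodBalls β) : DifferentiableAt ℂ (logShift β p a c) x := by
  unfold logShift
  have h1 : DifferentiableAt ℂ (fun x : (Fin n → ℂ) × ℂ => mob β a x.1) x :=
    (differentiableAt_mob ha hx).comp x differentiableAt_fst
  have h2 : DifferentiableAt ℂ (fun x : (Fin n → ℂ) × ℂ => pot β p x.1 (star a)) x :=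
    DifferentiableAt.pot β p differentiableAt_fst (differentiableAt_const _) hx
      (star_mem_prodBalls ha)
  fun_prop

end LogShift

section
variable {n l l' : ℕ} (β₁ : Fin n → Fin l) (p : Fin l → ℕ) (β₂ : Fin n → Fin l') (q : Fin l' → ℕ)
  (f : (Fin n → ℂ) × ℂ → Fin n → ℂ) (g : (Fin n → ℂ) × ℂ → ℂ)

/-- Renormalization of the map `(f, g)` at the point `x₀`. -/
def recenter (x₀ x : (Fin n → ℂ) × ℂ) : (Fin n → ℂ) × ℂ :=
  logShift β₂ q (f x₀) (conj (g x₀))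
    (f (logShift β₁ p x₀.1 x₀.2 x), g (logShift β₁ p x₀.1 x₀.2 x))

/-- The points near which the renormalization behaves well. -/
structure GoodPt (x₀ : (Fin n → ℂ) × ℂ) : Prop where
  mem : x₀.1 ∈ prodBalls β₁
  map_mem : f x₀ ∈ prodBalls β₂
  real : IsRealPt β₁ p x₀
  map_real : ∀ᶠ x in 𝓝 x₀, IsRealPt β₁ p x → IsRealPt β₂ q (f x, g x)
  diff_fst : ∀ᶠ x in 𝓝 x₀, DifferentiableAt ℂ f x
  diff_snd : ∀ᶠ x in 𝓝 x₀, DifferentiableAt ℂ g x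

variable {β₁ p β₂ q f g} {x₀ : (Fin n → ℂ) × ℂ}

lemma BundleGerm.eventually_goodPt (h : BundleGerm β₁ p β₂ q f g) :
    ∀ᶠ x₀ in 𝓝 0, IsRealPt β₁ p x₀ → GoodPt β₁ p β₂ q f g x₀ := by
  filter_upwards [eventually_mem_fst β₁, h.eventually_fst_mem,
    eventually_eventually_nhds.2 h.real, eventually_eventually_nhds.2 h.diff_fst,
    eventually_eventually_nhds.2 h.diff_snd] with x h1 h2 h3 h4 h5 h6
  exact ⟨h1, h2, h6, h3, h4, h5⟩

namespace GoodPt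
variable (h : GoodPt β₁ p β₂ q f g x₀)
include h

lemma tendsto_logShift : Tendsto (logShift β₁ p x₀.1 x₀.2) (𝓝 0) (𝓝 x₀) := by
  have := (differentiableAt_logShift (p := p) h.mem x₀.2 (x := 0)
    (zero_mem_prodBalls β₁)).continuousAt.tendsto
  rwa [logShift_zero] at this

lemma map_eq : g x₀ + conj (g x₀) + pot β₂ q (f x₀) (star (f x₀)) = 0 :=
  h.map_real.self_of_nhds h.real

lemma conj_map_eq : conj (g x₀) + g x₀ + pot β₂ q (f x₀) (star (f x₀)) = 0 := by
  rw [← h.map_eq]; ring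

lemma eventually_mem : ∀ᶠ x in 𝓝 x₀, f x ∈ prodBalls β₂ :=
  h.diff_fst.self_of_nhds.continuousAt.tendsto.eventually
    (isOpen_prodBalls.mem_nhds h.map_mem)

/-- The original map in terms of its renormalization. -/
lemma eventually_map_logShift : ∀ᶠ x in 𝓝 0,
    (f (logShift β₁ p x₀.1 x₀.2 x), g (logShift β₁ p x₀.1 x₀.2 x)) =
      logShift β₂ q (f x₀) (g x₀) (recenter β₁ p β₂ q f g x₀ x) := by
  filter_upwards [h.tendsto_logShift.eventually h.eventually_mem] with x hx
  exact (logShift_logShift h.map_mem h.map_eq hx).symm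

lemma differentiableAt_recenter : ∀ᶠ x in 𝓝 0, DifferentiableAt ℂ (recenter β₁ p β₂ q f g x₀) x := by
  filter_upwards [h.tendsto_logShift.eventually h.eventually_mem,
    h.tendsto_logShift.eventually h.diff_fst, h.tendsto_logShift.eventually h.diff_snd,
    eventually_mem_fst β₁] with x h1 h2 h3 h4
  have h5 : DifferentiableAt ℂ (fun y => (f y, g y)) (logShift β₁ p x₀.1 x₀.2 x) := h2.prodMk h3
  exact (differentiableAt_logShift h.map_mem _ h1).comp x
    (h5.comp x (differentiableAt_logShift h.mem _ h4))

lemma bundleGerm : BundleGerm β₁ p β₂ q (fun x => (recenter β₁ p β₂ q f g x₀ x).1)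
    (fun x => (recenter β₁ p β₂ q f g x₀ x).2) := by
  have h0 : recenter β₁ p β₂ q f g x₀ 0 = 0 := by
    rw [recenter, logShift_zero]
    exact logShift_self h.map_mem h.conj_map_eq
  refine ⟨h.differentiableAt_recenter.mono fun x hx => hx.fst,
    h.differentiableAt_recenter.mono fun x hx => hx.snd, by simp [h0], by simp [h0], ?_⟩
  filter_upwards [h.tendsto_logShift.eventually h.eventually_mem,
    h.tendsto_logShift.eventually h.map_real, eventually_mem_fst β₁] with x h1 h2 h3 h4
  refine isRealPt_logShift h.map_mem ?_ h1 (h2 (isRealPt_logShift h.mem h.real h3 h4))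
  simp only [IsRealPt, conj_conj]
  exact h.conj_map_eq

lemma hasDerivAt_vertical : HasDerivAt (fun t : ℂ => f (logShift β₁ p x₀.1 x₀.2 (0, t)))
      (fderiv ℂ f x₀ (0, 1)) 0 ∧
    HasDerivAt (fun t : ℂ => g (logShift β₁ p x₀.1 x₀.2 (0, t))) (fderiv ℂ g x₀ (0, 1)) 0 := by
  have hc : HasDerivAt (fun t : ℂ => logShift β₁ p x₀.1 x₀.2 (0, t)) (0, 1) 0 := by
    simp only [logShift, mob_zero, pot_zero_left, add_zero]
    exact (hasDerivAt_const _ _).prodMk ((hasDerivAt_id _).add_const _)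
  have hc0 : logShift β₁ p x₀.1 x₀.2 (0, 0) = x₀ := logShift_zero _
  exact ⟨h.diff_fst.self_of_nhds.hasFDerivAt.hasDerivAt_line hc hc0,
    h.diff_snd.self_of_nhds.hasFDerivAt.hasDerivAt_line hc hc0⟩

lemma fderiv_recenter_snd : fderiv ℂ (fun x => (recenter β₁ p β₂ q f g x₀ x).2) 0 (0, 1) =
    fderiv ℂ g x₀ (0, 1) + dpot β₂ q (f x₀) (star (f x₀)) (fderiv ℂ f x₀ (0, 1)) := by
  have h1 := h.bundleGerm.diff_snd.self_of_nhds.hasFDerivAt.hasDerivAt_line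
    hasDerivAt_inr rfl
  obtain ⟨h2, h3⟩ := h.hasDerivAt_vertical
  have hc0 : logShift β₁ p x₀.1 x₀.2 (0, 0) = x₀ := logShift_zero _
  have h4 := (h3.add_const (conj (g x₀))).add (HasDerivAt.pot β₂ q h2
    (hasDerivAt_const 0 (star (f x₀))) (by rw [hc0]; exact h.map_mem) (star_mem_prodBalls h.map_mem))
  have h5 := h1.unique h4
  rw [h5, hc0]
  simp [dpot]

lemma fderiv_fst_eq_zero
    (h0 : fderiv ℂ (fun x => (recenter β₁ p β₂ q f g x₀ x).1) 0 (0, 1) = 0) :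
    fderiv ℂ f x₀ (0, 1) = 0 := by
  have h1 := h.bundleGerm.diff_fst.self_of_nhds.hasFDerivAt.hasDerivAt_line
    hasDerivAt_inr rfl
  rw [h0] at h1
  have h2 : HasFDerivAt (mob β₂ (f x₀)) _ (0 : Fin n → ℂ) :=
    (differentiableAt_mob h.map_mem (zero_mem_prodBalls β₂)).hasFDerivAt
  have h3 := h2.hasDerivAt_line h1 h.bundleGerm.fst_zero
  rw [map_zero] at h3
  refine h.hasDerivAt_vertical.1.unique (h3.congr_of_eventuallyEq ?_)
  have ht : Tendsto (fun t : ℂ => ((0, t) : (Fin n → ℂ) × ℂ)) (𝓝 0) (𝓝 0) :=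
    hasDerivAt_inr.continuousAt.tendsto
  filter_upwards [ht.eventually h.eventually_map_logShift] with t ht
  exact congrArg Prod.fst ht

/-- If the renormalization degenerates, the derivative vanishes in the complex tangent
directions. -/
lemma fderiv_tangent_eq_zero (hq : ∀ j, 0 < q j)
    (h0 : fderiv ℂ (fun x => (recenter β₁ p β₂ q f g x₀ x).2) 0 (0, 1) = 0) (v : Fin n → ℂ) :
    fderiv ℂ f x₀ (v, -dpot β₁ p x₀.1 (star x₀.1) v) = 0 ∧
      fderiv ℂ g x₀ (v, -dpot β₁ p x₀.1 (star x₀.1) v) = 0 := by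
  have hb := h.bundleGerm
  have hA := hb.baseDeriv_eq_zero hq h0
  have hline : HasDerivAt (fun t : ℂ => x₀.1 + t • v) v 0 := by
    simpa using ((hasDerivAt_id (0 : ℂ)).smul_const v).const_add x₀.1
  set c : ℂ → (Fin n → ℂ) × ℂ := fun t => (mob β₁ x₀.1 (x₀.1 + t • v), 0) with hcdef
  have hc0 : c 0 = 0 := by simp [hcdef, mob_self h.mem]
  obtain ⟨u, hu⟩ : ∃ u, HasDerivAt c (u, 0) 0 := by
    have h1 : HasFDerivAt (mob β₁ x₀.1) _ x₀.1 :=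
      (differentiableAt_mob h.mem h.mem).hasFDerivAt
    exact ⟨_, (h1.hasDerivAt_line hline (by simp)).prodMk (hasDerivAt_const _ _)⟩
  have hct : Tendsto c (𝓝 0) (𝓝 0) := by
    have := hu.continuousAt.tendsto
    rwa [hc0] at this
  have hmem : ∀ᶠ t in 𝓝 (0 : ℂ), x₀.1 + t • v ∈ prodBalls β₁ :=
    eventually_mem_prodBalls β₁ hline.continuousAt (by simpa using h.mem)
  -- the curve through `x₀`
  have hy : HasDerivAt (fun t => logShift β₁ p x₀.1 x₀.2 (c t))
      (v, -dpot β₁ p x₀.1 (star x₀.1) v) 0 := by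
    have h1 := HasDerivAt.pot β₁ p hline (hasDerivAt_const 0 (star x₀.1))
      (by simpa using h.mem) (star_mem_prodBalls h.mem)
    have h2 := hline.prodMk (h1.const_sub (x₀.2 + pot β₁ p x₀.1 (star x₀.1)))
    have h3 : dpot β₁ p (star x₀.1) (x₀.1 + (0 : ℂ) • v) 0 = 0 := by simp [dpot]
    rw [h3, zero_smul, add_zero, add_zero] at h2
    refine h2.congr_of_eventuallyEq ?_
    filter_upwards [hmem] with t ht
    simp only [logShift, hcdef, mob_mob h.mem ht, pot_mob_star h.mem ht, zero_add]
    rw [add_sub_assoc]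
  have hy0 : logShift β₁ p x₀.1 x₀.2 (c 0) = x₀ := by rw [hc0]; exact logShift_zero _
  have hf := h.diff_fst.self_of_nhds.hasFDerivAt.hasDerivAt_line hy hy0
  have hg := h.diff_snd.self_of_nhds.hasFDerivAt.hasDerivAt_line hy hy0
  have h1 := hb.diff_fst.self_of_nhds.hasFDerivAt.hasDerivAt_line hu hc0
  have h2 : fderiv ℂ (fun x => (recenter β₁ p β₂ q f g x₀ x).1) 0 (u, 0) = 0 := by
    rw [← baseDeriv_apply, hA]; rfl
  rw [h2] at h1
  have h3 : HasFDerivAt (mob β₂ (f x₀)) _ (0 : Fin n → ℂ) :=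
    (differentiableAt_mob h.map_mem (zero_mem_prodBalls β₂)).hasFDerivAt
  have h4 := h3.hasDerivAt_line h1 (by rw [hc0]; exact hb.fst_zero)
  rw [map_zero] at h4
  have hf0 : fderiv ℂ f x₀ (v, -dpot β₁ p x₀.1 (star x₀.1) v) = 0 := by
    refine hf.unique (h4.congr_of_eventuallyEq ?_)
    filter_upwards [hct.eventually h.eventually_map_logShift] with t ht
    exact congrArg Prod.fst ht
  refine ⟨hf0, ?_⟩
  rw [hf0] at hf
  have h5 := HasDerivAt.pot β₂ q hf (hasDerivAt_const 0 (star (f x₀)))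
    (by rw [hy0]; exact h.map_mem) (star_mem_prodBalls h.map_mem)
  have h6 := (h5.const_sub (-conj (g x₀)))
  refine (hg.unique (h6.congr_of_eventuallyEq ?_)).trans (by simp [dpot])
  have hct' : Tendsto (fun t => (c t).1) (𝓝 0) (𝓝 0) := (continuous_fst.tendsto' _ _ rfl).comp hct
  filter_upwards [hct'.eventually hb.snd_apply_zero] with t ht
  simp only [recenter, logShift] at ht ⊢
  linear_combination ht

end GoodPt
end

lemma fderiv_apply_prod {n : ℕ} {k : (Fin n → ℂ) × ℂ → ℂ} (x : (Fin n → ℂ) × ℂ)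
    (v : Fin n → ℂ) (c : ℂ) : fderiv ℂ k x (v, c) = fderiv ℂ k x (v, 0) + c * fderiv ℂ k x (0, 1) := by
  have : ((v, c) : (Fin n → ℂ) × ℂ) = (v, 0) + c • (0, 1) := by simp
  rw [this, map_add, map_smul, smul_eq_mul]

section
variable {n l : ℕ} (β : Fin n → Fin l) (p : Fin l → ℕ)

/-- A germ whose differential kills the complex tangent directions at the real points is
constant. -/
lemma eventually_fderiv_eq_zero_of_tangent (hn : 1 ≤ n) (hp : ∀ i, 0 < p i)
    {k : (Fin n → ℂ) × ℂ → ℂ} (hk : ∀ᶠ x in 𝓝 0, DifferentiableAt ℂ k x)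
    (h0 : ∀ᶠ x in 𝓝 0, IsRealPt β p x → ∀ v, fderiv ℂ k x (v, -dpot β p x.1 (star x.1) v) = 0) :
    ∀ᶠ x in 𝓝 0, fderiv ℂ k x = 0 := by
  have hpol : ∀ v : Fin n → ℂ, ∀ᶠ P in 𝓝 0, OnSegre β p P →
      fderiv ℂ k P.1 (v, 0) + -dpot β p P.1.1 P.2.1 v * fderiv ℂ k P.1 (0, 1) = 0 := by
    intro v
    refine eventually_onSegre_imp β p ?_ ?_
    · have t1 : Tendsto (fun P : ((Fin n → ℂ) × ℂ) × ((Fin n → ℂ) × ℂ) => P.1) (𝓝 0) (𝓝 0) :=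
        continuous_fst.tendsto' _ _ rfl
      have t2 : Tendsto (fun P : ((Fin n → ℂ) × ℂ) × ((Fin n → ℂ) × ℂ) => P.2) (𝓝 0) (𝓝 0) :=
        continuous_snd.tendsto' _ _ rfl
      filter_upwards [t1.eventually (hk.differentiableAt_fderiv_apply (v, 0)),
        t1.eventually (hk.differentiableAt_fderiv_apply (0, 1)),
        t1.eventually (eventually_mem_fst β), t2.eventually (eventually_mem_fst β)]
        with P h1 h2 h3 h4
      have h5 := h1.comp P differentiableAt_fst
      have h6 := h2.comp P differentiableAt_fst
      exact h5.add ((DifferentiableAt.dpot β p differentiableAt_fst.fst differentiableAt_snd.fst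
        (differentiableAt_const v) h3 h4).neg.mul h6)
    · filter_upwards [h0] with x hx hr
      have := hx hr v
      rwa [fderiv_apply_prod] at this
  have hbase : ∀ v : Fin n → ℂ, ∀ᶠ x in 𝓝 0, fderiv ℂ k x (v, 0) = 0 := by
    intro v
    have ht : Tendsto (fun x : (Fin n → ℂ) × ℂ => (x, ((0 : Fin n → ℂ), -x.2))) (𝓝 0) (𝓝 0) := by
      have : Continuous (fun x : (Fin n → ℂ) × ℂ => (x, ((0 : Fin n → ℂ), -x.2))) := by fun_prop
      exact this.tendsto' _ _ (by simp)
    filter_upwards [ht.eventually (hpol v)] with x hx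
    simpa [OnSegre, dpot] using hx
  have hfib : ∀ᶠ x in 𝓝 0, fderiv ℂ k x (0, 1) = 0 := by
    set e : Fin n → ℂ := Pi.single ⟨0, hn⟩ 1 with he
    have ht : Tendsto (fun P : (Fin n → ℂ) × ((Fin n → ℂ) × ℂ) =>
        (P.2, (P.1, -P.2.2 - pot β p P.2.1 P.1))) (𝓝 (0, 0)) (𝓝 0) := by
      have h0 : DifferentiableAt ℂ
          (fun P : (Fin n → ℂ) × ((Fin n → ℂ) × ℂ) => pot β p P.2.1 P.1) 0 :=
        DifferentiableAt.pot β p differentiableAt_snd.fst differentiableAt_fst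
          (zero_mem_prodBalls β) (zero_mem_prodBalls β)
      have h1 := h0.continuousAt
      have h2 : ContinuousAt (fun P : (Fin n → ℂ) × ((Fin n → ℂ) × ℂ) =>
        (P.2, (P.1, -P.2.2 - pot β p P.2.1 P.1))) 0 := by fun_prop
      have h3 := h2.tendsto
      simp only [Prod.snd_zero, Prod.fst_zero, pot_zero_left, neg_zero, sub_zero] at h3
      exact h3
    have h1 := (ht.eventually (hpol e)).curry_nhds
    have h2 : Tendsto (fun t : ℂ => t • e) (𝓝[≠] 0) (𝓝 0) :=
      (tendsto_smul_const_zero e).mono_left nhdsWithin_le_nhds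
    obtain ⟨s, ⟨hs, hsm⟩, hs0⟩ := ((h2.eventually (h1.and (isOpen_prodBalls.mem_nhds
      (zero_mem_prodBalls β)))).and self_mem_nhdsWithin).exists
    have h3 : DifferentiableAt ℂ (fun x : (Fin n → ℂ) × ℂ => dpot β p x.1 (s • e) e) 0 :=
      DifferentiableAt.dpot β p differentiableAt_fst (differentiableAt_const _)
        (differentiableAt_const _) (zero_mem_prodBalls β) hsm
    have h4 : dpot β p (0 : (Fin n → ℂ) × ℂ).1 (s • e) e ≠ 0 := by
      have : herm β p e e = p (β ⟨0, hn⟩) := by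
        simp [herm_eq_sum, he, Pi.single_apply]
      rw [Prod.fst_zero, dpot_zero_left, herm_smul_right, this]
      exact mul_ne_zero hs0 (by exact_mod_cast (hp _).ne')
    filter_upwards [hs, hbase e, h3.continuousAt.eventually_ne h4] with x hx1 hx2 hx3
    have := hx1 (by simp only [OnSegre]; ring)
    rw [hx2, zero_add, neg_mul, neg_eq_zero] at this
    exact (mul_eq_zero.1 this).resolve_left hx3
  filter_upwards [eventually_all.2 fun j : Fin n => hbase (Pi.single j 1), hfib] with x hx1 hx2
  have h1 : (fderiv ℂ k x).toLinearMap ∘ₗ LinearMap.inl ℂ (Fin n → ℂ) ℂ = 0 :=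
    LinearMap.pi_ext' fun j => LinearMap.ext_ring (by simpa using hx1 j)
  ext v
  · exact LinearMap.congr_fun h1 v
  · simpa using hx2

end

section
variable {n l l' : ℕ} {β₁ : Fin n → Fin l} {p : Fin l → ℕ} {β₂ : Fin n → Fin l'} {q : Fin l' → ℕ}
  {f : (Fin n → ℂ) × ℂ → Fin n → ℂ} {g : (Fin n → ℂ) × ℂ → ℂ}

variable (β₂ q f g) in
/-- The polarized fibre scale of the renormalizations. -/
def segreScale (P : ((Fin n → ℂ) × ℂ) × ((Fin n → ℂ) × ℂ)) : ℂ :=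
  fderiv ℂ g P.1 (0, 1) + dpot β₂ q (f P.1) (star (f (star P.2))) (fderiv ℂ f P.1 (0, 1))

lemma GoodPt.fderiv_recenter_snd_eq {x₀ : (Fin n → ℂ) × ℂ} (hx : GoodPt β₁ p β₂ q f g x₀) :
    fderiv ℂ (fun x => (recenter β₁ p β₂ q f g x₀ x).2) 0 (0, 1) =
      segreScale β₂ q f g (x₀, star x₀) := by
  rw [hx.fderiv_recenter_snd, segreScale, star_star]

namespace BundleGerm
variable (h : BundleGerm β₁ p β₂ q f g)
include h

lemma differentiableAt_segreScale : ∀ᶠ P in 𝓝 0, DifferentiableAt ℂ (segreScale β₂ q f g) P := by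
  have t1 : Tendsto (fun P : ((Fin n → ℂ) × ℂ) × ((Fin n → ℂ) × ℂ) => P.1) (𝓝 0) (𝓝 0) :=
    continuous_fst.tendsto' _ _ rfl
  have t2 : Tendsto (fun P : ((Fin n → ℂ) × ℂ) × ((Fin n → ℂ) × ℂ) => P.2) (𝓝 0) (𝓝 0) :=
    continuous_snd.tendsto' _ _ rfl
  filter_upwards [t1.eventually (h.diff_snd.differentiableAt_fderiv_apply (0, 1)),
    t1.eventually (h.diff_fst.differentiableAt_fderiv_apply_pi (0, 1)),
    t1.eventually h.diff_fst, t2.eventually h.diff_star_fst,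
    t1.eventually h.eventually_fst_mem, t2.eventually h.eventually_star_fst_mem]
    with P h1 h2 h3 h4 h5 h6
  exact (h1.comp P differentiableAt_fst).add (DifferentiableAt.dpot β₂ q
    (h3.comp P differentiableAt_fst) (h4.comp P differentiableAt_snd)
    (h2.comp P differentiableAt_fst) h5 h6)

lemma segreScale_zero : segreScale β₂ q f g 0 = fderiv ℂ g 0 (0, 1) := by
  simp [segreScale, h.fst_zero, dpot]

lemma eventually_segreScale_ne_zero (h0 : fderiv ℂ g 0 (0, 1) ≠ 0) :
    ∀ᶠ x in 𝓝 0, segreScale β₂ q f g (x, star x) ≠ 0 := by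
  have h1 := h.differentiableAt_segreScale.self_of_nhds.continuousAt
  have ht : Tendsto (fun x : (Fin n → ℂ) × ℂ => (x, star x)) (𝓝 0) (𝓝 0) := by
    have : Continuous (fun x : (Fin n → ℂ) × ℂ => (x, star x)) := by fun_prop
    exact this.tendsto' _ _ (by simp)
  exact ht.eventually (h1.eventually_ne (by rwa [h.segreScale_zero]))

section Nondegenerate
variable (hβ₁ : Function.Surjective β₁) (hβ₂ : Function.Surjective β₂) (hn : 1 ≤ n)
    (hp : ∀ i, 0 < p i) (hq : ∀ j, 0 < q j) (hrank : 2 ≤ l ∨ 2 ≤ l')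
    (h0 : fderiv ℂ g 0 (0, 1) ≠ 0)
include hβ₁ hβ₂ hn hp hq hrank h0

/-- The fibre scale is locally constant at real points. -/
lemma segreScale_eq : ∀ᶠ x in 𝓝 0, IsRealPt β₁ p x →
    segreScale β₂ q f g (x, star x) = fderiv ℂ g 0 (0, 1) := by
  filter_upwards [h.eventually_goodPt, h.eventually_segreScale_ne_zero h0] with x hx1 hx2 hr
  have hx := hx1 hr
  rw [← hx.fderiv_recenter_snd_eq] at hx2 ⊢
  obtain ⟨r, hr, hA⟩ := h.symbolMap hn hp hq h0
  obtain ⟨r', hr', hA'⟩ := hx.bundleGerm.symbolMap hn hp hq hx2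
  rw [hr, hr', hA.scale_unique hβ₁ hβ₂ hp hq hrank hA']

lemma fderiv_fst_vertical_zero : fderiv ℂ f 0 (0, 1) = 0 := by
  have hpol : ∀ᶠ P in 𝓝 0, OnSegre β₁ p P →
      segreScale β₂ q f g P - fderiv ℂ g 0 (0, 1) = 0 := by
    refine eventually_onSegre_imp β₁ p ?_ ?_
    · exact h.differentiableAt_segreScale.mono fun P hP => hP.sub_const _
    · filter_upwards [h.segreScale_eq hβ₁ hβ₂ hn hp hq hrank h0] with x hx hr
      rw [hx hr, sub_self]
  have ht : Tendsto (fun w : Fin n → ℂ => ((0 : (Fin n → ℂ) × ℂ), (w, (0 : ℂ)))) (𝓝 0) (𝓝 0) := by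
    have : Continuous (fun w : Fin n → ℂ => ((0 : (Fin n → ℂ) × ℂ), (w, (0 : ℂ)))) := by fun_prop
    exact this.tendsto' _ _ rfl
  refine h.eq_zero_of_herm_baseDeriv hp hq h0 fun w => ?_
  have h1 := HasDerivAt.herm β₂ q (hasDerivAt_const 0 (fderiv ℂ f 0 (0, 1)))
    (h.hasDerivAt_star_fst w)
  rw [herm_zero_left, zero_add] at h1
  refine h1.unique ((hasDerivAt_const (0 : ℂ) (0 : ℂ)).congr_of_eventuallyEq ?_)
  filter_upwards [(tendsto_smul_const_zero w).eventually (ht.eventually hpol)] with t ht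
  have := ht (by simp [OnSegre])
  simpa [segreScale, h.fst_zero, dpot_zero_left] using this

lemma eventually_fderiv_vertical : ∀ᶠ x in 𝓝 0,
    fderiv ℂ f x (0, 1) = 0 ∧ fderiv ℂ g x (0, 1) = fderiv ℂ g 0 (0, 1) := by
  have hreal : ∀ᶠ x in 𝓝 0, IsRealPt β₁ p x → fderiv ℂ f x (0, 1) = 0 := by
    filter_upwards [h.eventually_goodPt, h.eventually_segreScale_ne_zero h0] with x hx1 hx2 hr
    have hx := hx1 hr
    rw [← hx.fderiv_recenter_snd_eq] at hx2
    exact hx.fderiv_fst_eq_zero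
      (hx.bundleGerm.fderiv_fst_vertical_zero hβ₁ hβ₂ hn hp hq hrank hx2)
  have h1 : ∀ j, ∀ᶠ x in 𝓝 0, fderiv ℂ f x (0, 1) j = 0 := fun j =>
    eventually_eq_zero_of_isRealPt β₁ p
      ((h.diff_fst.differentiableAt_fderiv_apply_pi (0, 1)).mono fun x hx =>
        differentiableAt_pi.1 hx j)
      (hreal.mono fun x hx hr => by rw [hx hr]; rfl)
  have h2 := eventually_eq_zero_of_isRealPt β₁ p
    (k := fun x => fderiv ℂ g x (0, 1) - fderiv ℂ g 0 (0, 1))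
    ((h.diff_snd.differentiableAt_fderiv_apply (0, 1)).mono fun x hx => hx.sub_const _) (by
      filter_upwards [hreal, h.segreScale_eq hβ₁ hβ₂ hn hp hq hrank h0] with x hx1 hx2 hr
      rw [← hx2 hr, segreScale, hx1 hr]
      simp [dpot])
  filter_upwards [eventually_all.2 h1, h2] with x hx1 hx2
  exact ⟨funext hx1, sub_eq_zero.1 hx2⟩

/-- A nondegenerate germ is linear. -/
lemma eventually_eq_linear : ∀ᶠ x in 𝓝 0,
    f x = baseDeriv f x.1 ∧ g x = fderiv ℂ g 0 (0, 1) * x.2 := by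
  have hv := h.eventually_fderiv_vertical hβ₁ hβ₂ hn hp hq hrank h0
  obtain ⟨ε, hε, hb⟩ := Metric.eventually_nhds_iff_ball.1 ((hv.and h.diff_fst).and h.diff_snd)
  have hz0 : Tendsto (fun x : (Fin n → ℂ) × ℂ => (x.1, (0 : ℂ))) (𝓝 0) (𝓝 0) := by
    have : Continuous (fun x : (Fin n → ℂ) × ℂ => (x.1, (0 : ℂ))) := by fun_prop
    exact this.tendsto' _ _ rfl
  have hfst : Tendsto (fun x : (Fin n → ℂ) × ℂ => x.1) (𝓝 0) (𝓝 0) :=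
    continuous_fst.tendsto' _ _ rfl
  filter_upwards [Metric.ball_mem_nhds 0 hε, hfst.eventually h.snd_apply_zero,
    hfst.eventually (h.fst_apply_zero hp hq h0), hz0.eventually hv] with x hx h1 h2 h3
  rw [h3.2, div_self h0, one_smul] at h2
  obtain ⟨z, c⟩ := x
  have hmem : ∀ t ∈ Metric.ball (0 : ℂ) ε, (z, t) ∈ Metric.ball (0 : (Fin n → ℂ) × ℂ) ε := by
    intro t ht
    rw [mem_ball_zero_iff, Prod.norm_def] at hx ⊢
    exact max_lt ((le_max_left _ _).trans_lt hx) (by simpa using ht)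
  have hc : c ∈ Metric.ball (0 : ℂ) ε := by
    rw [mem_ball_zero_iff, Prod.norm_def] at hx
    simpa using (le_max_right _ _).trans_lt hx
  have hline : ∀ t : ℂ, HasDerivAt (fun t : ℂ => (z, t)) (0, 1) t := fun t =>
    (hasDerivAt_const _ _).prodMk (hasDerivAt_id _)
  have hconst : ∀ {E : Type} [NormedAddCommGroup E] [NormedSpace ℂ E] (k : ℂ → E),
      (∀ t ∈ Metric.ball (0 : ℂ) ε, HasDerivAt k 0 t) → k c = k 0 := by
    intro E _ _ k hk
    have := (convex_ball (0 : ℂ) ε).is_const_of_fderivWithin_eq_zero (𝕜 := ℂ) (f := k)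
      (fun t ht => (hk t ht).differentiableAt.differentiableWithinAt) (fun t ht => by
        rw [fderivWithin_of_isOpen Metric.isOpen_ball ht]
        ext
        simp [(hk t ht).deriv])
      hc (Metric.mem_ball_self hε)
    exact this
  constructor
  · rw [← h2]
    refine hconst (fun t => f (z, t)) fun t ht => ?_
    have h4 := hb _ (hmem t ht)
    have h5 := h4.1.2.hasFDerivAt.hasDerivAt_line (hline t) rfl
    rwa [h4.1.1.1] at h5
  · have h6 := hconst (fun t => g (z, t) - fderiv ℂ g 0 (0, 1) * t) fun t ht => by
      have h4 := hb _ (hmem t ht)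
      have h5 := h4.2.hasFDerivAt.hasDerivAt_line (hline t) rfl
      rw [h4.1.1.2] at h5
      simpa using h5.fun_sub ((hasDerivAt_id t).const_mul (fderiv ℂ g 0 (0, 1)))
    simp only [h1, mul_zero, sub_zero] at h6
    exact sub_eq_zero.1 h6

/-- The potentials are intertwined by the linear part of a nondegenerate germ. -/
lemma eventually_pot_eq : ∀ᶠ P : (Fin n → ℂ) × (Fin n → ℂ) in 𝓝 0,
    pot β₂ q (baseDeriv f P.1) (star (baseDeriv f (star P.2))) =
      fderiv ℂ g 0 (0, 1) * pot β₁ p P.1 P.2 := by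
  have hlin := h.eventually_eq_linear hβ₁ hβ₂ hn hp hq hrank h0
  have hd : DifferentiableAt ℂ (fun P : (Fin n → ℂ) × (Fin n → ℂ) => pot β₁ p P.1 P.2) 0 :=
    DifferentiableAt.pot β₁ p differentiableAt_fst differentiableAt_snd (zero_mem_prodBalls β₁)
      (zero_mem_prodBalls β₁)
  have hd' := hd.continuousAt
  have t1 : Tendsto (fun P : (Fin n → ℂ) × (Fin n → ℂ) => (P.1, -pot β₁ p P.1 P.2)) (𝓝 0)
      (𝓝 0) := by
    have h1 : ContinuousAt (fun P : (Fin n → ℂ) × (Fin n → ℂ) => (P.1, -pot β₁ p P.1 P.2)) 0 := by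
      fun_prop
    have := h1.tendsto
    simp only [Prod.snd_zero, Prod.fst_zero, pot_zero_left, neg_zero] at this
    exact this
  have t2 : Tendsto (fun P : (Fin n → ℂ) × (Fin n → ℂ) => star (P.2, (0 : ℂ))) (𝓝 0) (𝓝 0) := by
    have : Continuous (fun P : (Fin n → ℂ) × (Fin n → ℂ) => star (P.2, (0 : ℂ))) := by fun_prop
    exact this.tendsto' _ _ (by simp [Prod.ext_iff])
  filter_upwards [h.segre_eq, t1.eventually hlin, t2.eventually hlin] with P h1 h2 h3
  rw [h2.1, h2.2, h3.1] at h1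
  have : (star (P.2, (0 : ℂ))).1 = star P.2 := rfl
  rw [this] at h1
  linear_combination h1

end Nondegenerate

/-- A germ whose renormalizations all degenerate is constant. -/
lemma eventually_eq_zero (hn : 1 ≤ n) (hp : ∀ i, 0 < p i) (hq : ∀ j, 0 < q j)
    (h0 : ∀ᶠ x in 𝓝 0, IsRealPt β₁ p x → segreScale β₂ q f g (x, star x) = 0) :
    ∀ᶠ x in 𝓝 0, f x = 0 ∧ g x = 0 := by
  have hreal : ∀ᶠ x in 𝓝 0, IsRealPt β₁ p x → ∀ v,
      fderiv ℂ f x (v, -dpot β₁ p x.1 (star x.1) v) = 0 ∧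
        fderiv ℂ g x (v, -dpot β₁ p x.1 (star x.1) v) = 0 := by
    filter_upwards [h0, h.eventually_goodPt] with x hx1 hx2 hr v
    have hx := hx2 hr
    exact hx.fderiv_tangent_eq_zero hq ((hx.fderiv_recenter_snd_eq).trans (hx1 hr)) v
  have h1 : ∀ j, ∀ᶠ x in 𝓝 0, f x j = 0 := by
    intro j
    have hd : ∀ᶠ x in 𝓝 0, DifferentiableAt ℂ (fun x => f x j) x :=
      h.diff_fst.mono fun x hx => differentiableAt_pi.1 hx j
    have h2 := eventually_eq_of_fderiv_eq_zero hd
      (eventually_fderiv_eq_zero_of_tangent β₁ p hn hp hd (by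
        filter_upwards [hreal, h.diff_fst] with x hx hd hr v
        have h3 := (hx hr v).1
        have h4 := congrFun h3 j
        rw [fderiv_pi fun j => differentiableAt_pi.1 hd j] at h4
        exact h4))
    simpa [h.fst_zero] using h2
  have h2 := eventually_eq_of_fderiv_eq_zero h.diff_snd
    (eventually_fderiv_eq_zero_of_tangent β₁ p hn hp h.diff_snd
      (hreal.mono fun x hx hr v => (hx hr v).2))
  rw [h.snd_zero] at h2
  filter_upwards [eventually_all.2 h1, h2] with x hx1 hx2
  exact ⟨funext hx1, hx2⟩

end BundleGerm
end

section PowerSums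
variable {l l' : ℕ} {p : Fin l → ℕ} {q : Fin l' → ℕ} {x : Fin l → ℝ} {y : Fin l' → ℝ} {r : ℝ}

/-- Proportional logarithmic sums have proportional power sums. -/
lemma sum_pow_eq_of_eventually (h : ∀ᶠ u : ℂ in 𝓝 0,
    ∑ j, (q j : ℂ) * -log (1 - u * y j) = r * ∑ i, (p i : ℂ) * -log (1 - u * x i)) {k : ℕ}
    (hk : k ≠ 0) : ∑ j, (q j : ℝ) * y j ^ k = r * ∑ i, (p i : ℝ) * x i ^ k := by
  have hs : ∀ {m : ℕ} (c : Fin m → ℕ) (a : Fin m → ℝ), ∀ᶠ u : ℂ in 𝓝 0,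
      HasSum (fun k : ℕ => u ^ k * (∑ i, (c i : ℂ) * ((a i : ℂ) ^ k / k)))
        (∑ i, (c i : ℂ) * -log (1 - u * a i)) := by
    intro m c a
    have h1 : ∀ i, ∀ᶠ u : ℂ in 𝓝 0, ‖u * a i‖ < 1 := fun i => by
      have : Continuous fun u : ℂ => ‖u * a i‖ := by fun_prop
      exact this.tendsto' 0 0 (by simp) |>.eventually_lt_const one_pos
    filter_upwards [eventually_all.2 h1] with u hu
    have := hasSum_sum (s := Finset.univ) fun i _ =>
      (hasSum_taylorSeries_neg_log (hu i)).mul_left (c i : ℂ)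
    refine this.congr_fun fun k => ?_
    rw [Finset.mul_sum]
    refine Finset.sum_congr rfl fun i _ => ?_
    rw [mul_pow]; ring
  set a : ℕ → ℂ := fun k => (∑ j, (q j : ℂ) * ((y j : ℂ) ^ k / k)) -
    r * ∑ i, (p i : ℂ) * ((x i : ℂ) ^ k / k) with ha
  have hser : HasFPowerSeriesAt (0 : ℂ → ℂ) (FormalMultilinearSeries.ofScalars ℂ a) 0 := by
    rw [hasFPowerSeriesAt_iff]
    filter_upwards [h, hs q y, hs p x] with u h1 h2 h3
    have h4 := h2.sub (h3.mul_left (r : ℂ))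
    rw [h1, sub_self] at h4
    refine h4.congr_fun fun k => ?_
    simp only [FormalMultilinearSeries.coeff_ofScalars, ha, smul_eq_mul]
    ring
  have h5 : a k = 0 := by
    rw [← FormalMultilinearSeries.coeff_ofScalars (𝕜 := ℂ) (p := a), hser.eq_zero]; rfl
  have hk' : (k : ℂ) ≠ 0 := Nat.cast_ne_zero.2 hk
  have h6 : (∑ j, (q j : ℂ) * (y j : ℂ) ^ k) = r * ∑ i, (p i : ℂ) * (x i : ℂ) ^ k := by
    simp only [ha, ← mul_div_assoc, ← Finset.sum_div] at h5
    field_simp at h5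
    exact sub_eq_zero.1 (h5.trans (mul_zero _))
  exact_mod_cast h6

lemma lt_one_of_sum_pow_eq (hq : ∀ j, 0 < q j) (hx0 : ∀ i, 0 ≤ x i) (hy0 : ∀ j, 0 ≤ y j)
    (h : ∀ k : ℕ, k ≠ 0 → ∑ j, (q j : ℝ) * y j ^ k = r * ∑ i, (p i : ℝ) * x i ^ k)
    (hx : ∀ i, x i < 1) (j : Fin l') : y j < 1 := by
  by_contra! hy
  have hlim : Tendsto (fun k : ℕ => r * ∑ i, (p i : ℝ) * x i ^ k) atTop (𝓝 0) := by
    have h1 : Tendsto (fun k : ℕ => ∑ i, (p i : ℝ) * x i ^ k) atTop (𝓝 (∑ i, (p i : ℝ) * 0)) :=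
      tendsto_finsetSum _ fun i _ =>
        (tendsto_pow_atTop_nhds_zero_of_lt_one (hx0 i) (hx i)).const_mul _
    simpa using h1.const_mul r
  refine absurd (ge_of_tendsto hlim (b := 1) ?_) (by norm_num)
  filter_upwards [eventually_ne_atTop 0] with k hk
  rw [← h k hk]
  have h1 : (1 : ℝ) ≤ q j := by exact_mod_cast hq j
  calc (1 : ℝ) ≤ q j * y j ^ k := one_le_mul_of_one_le_of_one_le h1 (one_le_pow₀ hy)
    _ ≤ _ := Finset.single_le_sum (f := fun j => (q j : ℝ) * y j ^ k)
      (fun j _ => mul_nonneg (by positivity) (pow_nonneg (hy0 j) _)) (Finset.mem_univ j)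

lemma one_le_of_sum_pow_eq (hq : ∀ j, 0 < q j) (hy0 : ∀ j, 0 ≤ y j) (hr : 0 < r) {i₀ : Fin l}
    (hi₀ : p i₀ = 1) (h : ∀ k : ℕ, k ≠ 0 → ∑ j, (q j : ℝ) * y j ^ k =
      r * ∑ i, (p i : ℝ) * (if i = i₀ then 1 else 0 : ℝ) ^ k) : 1 ≤ r := by
  have h1 : ∀ k : ℕ, k ≠ 0 → ∑ j, (q j : ℝ) * y j ^ k = r := by
    intro k hk
    rw [h k hk]
    have : ∀ i, (p i : ℝ) * (if i = i₀ then 1 else 0 : ℝ) ^ k = if i = i₀ then 1 else 0 := by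
      intro i
      split_ifs with hi
      · simp [hi, hi₀]
      · simp [hk]
    simp only [this]
    simp
  obtain ⟨j, hj⟩ : ∃ j, 1 ≤ y j := by
    by_contra! hy
    have hlim : Tendsto (fun k : ℕ => ∑ j, (q j : ℝ) * y j ^ k) atTop (𝓝 (∑ j, (q j : ℝ) * 0)) :=
      tendsto_finsetSum _ fun j _ =>
        (tendsto_pow_atTop_nhds_zero_of_lt_one (hy0 j) (hy j)).const_mul _
    have h2 : Tendsto (fun k : ℕ => ∑ j, (q j : ℝ) * y j ^ k) atTop (𝓝 r) :=
      tendsto_const_nhds.congr' (by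
        filter_upwards [eventually_ne_atTop 0] with k hk using (h1 k hk).symm)
    have := tendsto_nhds_unique h2 hlim
    simp only [mul_zero, Finset.sum_const_zero] at this
    exact hr.ne' this
  have h2 : (1 : ℝ) ≤ q j := by exact_mod_cast hq j
  calc (1 : ℝ) ≤ q j * y j ^ 1 := one_le_mul_of_one_le_of_one_le h2 (one_le_pow₀ hj)
    _ ≤ ∑ j, (q j : ℝ) * y j ^ 1 := Finset.single_le_sum (f := fun j => (q j : ℝ) * y j ^ 1)
      (fun j _ => mul_nonneg (by positivity) (pow_nonneg (hy0 j) _)) (Finset.mem_univ j)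
    _ = r := h1 1 one_ne_zero

lemma prod_eq_of_sum_pow_eq (hx0 : ∀ i, 0 ≤ x i) (hy0 : ∀ j, 0 ≤ y j) (hx : ∀ i, x i < 1)
    (hy : ∀ j, y j < 1)
    (h : ∀ k : ℕ, k ≠ 0 → ∑ j, (q j : ℝ) * y j ^ k = ∑ i, (p i : ℝ) * x i ^ k) :
    ∏ j, (1 - y j) ^ q j = ∏ i, (1 - x i) ^ p i := by
  have hs : ∀ {m : ℕ} (c : Fin m → ℕ) (a : Fin m → ℝ), (∀ i, 0 ≤ a i) → (∀ i, a i < 1) →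
      HasSum (fun k : ℕ => (∑ i, (c i : ℝ) * a i ^ (k + 1)) / (k + 1))
        (-Real.log (∏ i, (1 - a i) ^ c i)) := by
    intro m c a h0 h1
    have h2 := hasSum_sum (s := Finset.univ) fun i _ =>
      (Real.hasSum_pow_div_log_of_abs_lt_one (abs_lt.2 ⟨by linarith [h0 i], h1 i⟩)).mul_left
        (c i : ℝ)
    rw [Real.log_prod fun i _ => (pow_pos (sub_pos.2 (h1 i)) _).ne', ← Finset.sum_neg_distrib]
    simp only [Real.log_pow, ← mul_neg]
    refine h2.congr_fun fun k => ?_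
    rw [Finset.sum_div]
    exact Finset.sum_congr rfl fun i _ => by ring
  have h1 := hs q y hy0 hy
  simp only [h _ (Nat.succ_ne_zero _)] at h1
  exact Real.log_injOn_pos (Finset.prod_pos fun j _ => pow_pos (sub_pos.2 (hy j)) _)
    (Finset.prod_pos fun i _ => pow_pos (sub_pos.2 (hx i)) _)
    (neg_injective (h1.unique (hs p x hx0 hx)))

end PowerSums

section
variable {n l l' : ℕ} {β₁ : Fin n → Fin l} {p : Fin l → ℕ} {β₂ : Fin n → Fin l'} {q : Fin l' → ℕ}

lemma blockSq_single {β : Fin n → Fin l} (a : Fin n) (i : Fin l) :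
    blockSq β i (Pi.single a 1) = if i = β a then 1 else 0 := by
  have : ∀ j, normSq ((Pi.single a 1 : Fin n → ℂ) j) = if j = a then 1 else 0 := by
    intro j
    rw [Pi.single_apply]; split_ifs <;> simp
  simp only [blockSq, this]
  simp [eq_comm]

/-- A linear map that intertwines the potentials up to scale is an isometric isomorphism of the
bounded domains. -/
lemma linear_isometry_of_pot_eq (hβ₁ : Function.Surjective β₁) (hβ₂ : Function.Surjective β₂)
    (hp : ∀ i, 0 < p i) (hp1 : ∃ i, p i = 1) (hq : ∀ j, 0 < q j) (hq1 : ∃ j, q j = 1)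
    {A : (Fin n → ℂ) →L[ℂ] (Fin n → ℂ)} {r : ℝ} (hr : 0 < r) (hA : Function.Bijective A)
    (h : ∀ᶠ P : (Fin n → ℂ) × (Fin n → ℂ) in 𝓝 0,
      pot β₂ q (A P.1) (star (A (star P.2))) = r * pot β₁ p P.1 P.2) :
    r = 1 ∧ Biholo A (prodBalls β₁) (prodBalls β₂) ∧
      ∀ z ∈ prodBalls β₁, gnorm β₂ q (A z) = gnorm β₁ p z := by
  have hsum : ∀ (z : Fin n → ℂ) (k : ℕ), k ≠ 0 → ∑ j, (q j : ℝ) * blockSq β₂ j (A z) ^ k =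
      r * ∑ i, (p i : ℝ) * blockSq β₁ i z ^ k := by
    intro z k hk
    refine sum_pow_eq_of_eventually ?_ hk
    have ht : Tendsto (fun t : ℂ => (t • z, t • star z)) (𝓝 0) (𝓝 0) := by
      have : Continuous (fun t : ℂ => (t • z, t • star z)) := by fun_prop
      exact this.tendsto' _ _ (by simp)
    obtain ⟨ε, hε, hb⟩ := Metric.eventually_nhds_iff_ball.1 (ht.eventually h)
    filter_upwards [Metric.ball_mem_nhds 0 (pow_pos hε 2)] with u hu
    obtain ⟨t, rfl⟩ := IsAlgClosed.exists_pow_nat_eq u (n := 2) two_pos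
    have htε : t ∈ Metric.ball 0 ε := by
      rw [mem_ball_zero_iff] at hu ⊢
      rw [norm_pow] at hu
      exact lt_of_pow_lt_pow_left₀ 2 hε.le hu
    have h1 := hb t htε
    simp only [star_smul, star_star, map_smul, pot, bil_smul_left, bil_smul_right,
      bil_self_star, ← mul_assoc, ← sq] at h1
    simpa [mul_neg, Finset.sum_neg_distrib] using h1
  have hnn₁ := fun (z : Fin n → ℂ) i => blockSq_nonneg β₁ i z
  have hnn₂ := fun (z : Fin n → ℂ) j => blockSq_nonneg β₂ j z
  have hsum' : ∀ (z : Fin n → ℂ) (k : ℕ), k ≠ 0 → ∑ i, (p i : ℝ) * blockSq β₁ i z ^ k =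
      r⁻¹ * ∑ j, (q j : ℝ) * blockSq β₂ j (A z) ^ k := by
    intro z k hk
    rw [hsum z k hk]; field_simp
  have hr1 : r = 1 := by
    obtain ⟨i₀, hi₀⟩ := hp1
    obtain ⟨j₀, hj₀⟩ := hq1
    obtain ⟨a, rfl⟩ := hβ₁ i₀
    obtain ⟨b, rfl⟩ := hβ₂ j₀
    obtain ⟨z, hz⟩ := hA.2 (Pi.single b 1)
    refine le_antisymm ?_ ?_
    · have := one_le_of_sum_pow_eq hp (hnn₁ z) (inv_pos.2 hr) hj₀ fun k hk => by
        rw [hsum' z k hk, hz]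
        simp only [blockSq_single]
      exact (one_le_inv₀ hr).1 this
    · exact one_le_of_sum_pow_eq hq (hnn₂ (A (Pi.single a 1))) hr hi₀ fun k hk => by
        rw [hsum _ k hk]
        simp only [blockSq_single]
  subst hr1
  have hmaps : ∀ z, A z ∈ prodBalls β₂ ↔ z ∈ prodBalls β₁ := fun z =>
    ⟨fun hz => lt_one_of_sum_pow_eq hp (hnn₂ (A z)) (hnn₁ z) (hsum' z) hz,
      fun hz => lt_one_of_sum_pow_eq hq (hnn₁ z) (hnn₂ (A z)) (hsum z) hz⟩
  let e := LinearEquiv.ofBijective A.toLinearMap hA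
  have he : ∀ z, A (e.symm z) = z := e.apply_symm_apply
  refine ⟨rfl, ⟨A.differentiable.differentiableOn, fun z hz => (hmaps z).2 hz, e.symm,
    ?_, fun w hw => ?_, fun z _ => e.symm_apply_apply z, fun w _ => he w⟩, fun z hz => ?_⟩
  · exact (LinearMap.toContinuousLinearMap e.symm.toLinearMap).differentiable.differentiableOn
  · rw [← hmaps, he]; exact hw
  · exact prod_eq_of_sum_pow_eq (hnn₁ z) (hnn₂ (A z)) hz ((hmaps z).2 hz) fun k hk => by
      rw [hsum z k hk, one_mul]

end

section BundleIso
variable {n l l' l'' : ℕ} {β₁ : Fin n → Fin l} {p : Fin l → ℕ} {β₂ : Fin n → Fin l'} {q : Fin l' → ℕ}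
  {β₃ : Fin n → Fin l''} {s : Fin l'' → ℕ}

lemma Biholo.comp {E F G : Type*} [NormedAddCommGroup E] [NormedSpace ℂ E]
    [NormedAddCommGroup F] [NormedSpace ℂ F] [NormedAddCommGroup G] [NormedSpace ℂ G]
    {f : E → F} {g : F → G} {s : Set E} {t : Set F} {u : Set G}
    (hg : Biholo g t u) (hf : Biholo f s t) : Biholo (g ∘ f) s u := by
  obtain ⟨hg1, hg2, g', hg3, hg4, hg5, hg6⟩ := hg
  obtain ⟨hf1, hf2, f', hf3, hf4, hf5, hf6⟩ := hf
  exact ⟨hg1.comp hf1 hf2, hg2.comp hf2, f' ∘ g', hf3.comp hg3 hg4, hf4.comp hg4,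
    hf5.comp hg5 hf2, hf6.comp hg6 hg4⟩

variable (β₁ p β₂ q) in
/-- `G` restricts over `Ω₁` to a norm-preserving isomorphism of the line bundles. -/
def IsBundleIso (G : (Fin n → ℂ) × ℂ → (Fin n → ℂ) × ℂ) : Prop :=
  ∃ (ψ : (Fin n → ℂ) → (Fin n → ℂ)) (φ : (Fin n → ℂ) → ℂ),
    Biholo ψ (prodBalls β₁) (prodBalls β₂) ∧
    DifferentiableOn ℂ φ (prodBalls β₁) ∧
    (∀ z ∈ prodBalls β₁, φ z ≠ 0) ∧
    (∀ z ∈ prodBalls β₁, gnorm β₂ q (ψ z) = normSq (φ z) * gnorm β₁ p z) ∧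
    ∀ P : (Fin n → ℂ) × ℂ, P.1 ∈ prodBalls β₁ → G P = (ψ P.1, P.2 * φ P.1)

lemma IsBundleIso.comp {G H : (Fin n → ℂ) × ℂ → (Fin n → ℂ) × ℂ}
    (hH : IsBundleIso β₂ q β₃ s H) (hG : IsBundleIso β₁ p β₂ q G) :
    IsBundleIso β₁ p β₃ s (H ∘ G) := by
  obtain ⟨ψ', φ', hb', hd', hne', hnorm', heq'⟩ := hH
  obtain ⟨ψ, φ, hb, hd, hne, hnorm, heq⟩ := hG
  refine ⟨ψ' ∘ ψ, fun z => φ z * φ' (ψ z), hb'.comp hb, hd.mul (hd'.comp hb.1 hb.2.1),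
    fun z hz => mul_ne_zero (hne z hz) (hne' _ (hb.2.1 hz)), fun z hz => ?_, fun P hP => ?_⟩
  · rw [Function.comp_apply, hnorm' _ (hb.2.1 hz), hnorm z hz, map_mul]
    ring
  · rw [Function.comp_apply, heq P hP, heq' _ (hb.2.1 hP)]
    simp [mul_assoc]

lemma isBundleIso_bundleMob {a : Fin n → ℂ} (ha : a ∈ prodBalls β₁) {c : ℂ}
    (hc : normSq c = gnorm β₁ p a) : IsBundleIso β₁ p β₁ p (bundleMob β₁ p a c) := by
  have hd : DifferentiableOn ℂ (mob β₁ a) (prodBalls β₁) := fun z hz =>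
    (differentiableAt_mob ha hz).differentiableWithinAt
  have hm : Set.MapsTo (mob β₁ a) (prodBalls β₁) (prodBalls β₁) := fun z hz => mob_mem ha hz
  have hc0 : c ≠ 0 := by
    rw [← normSq_pos, hc]
    exact gnorm_pos p ha
  refine ⟨mob β₁ a, fun z => c / polNorm β₁ p z (star a),
    ⟨hd, hm, mob β₁ a, hd, hm, fun z hz => mob_mob ha hz, fun z hz => mob_mob ha hz⟩,
    fun z hz => ?_, fun z hz => ?_, fun z hz => ?_, fun P _ => rfl⟩
  · have h0 := polNorm_ne_zero p hz (star_mem_prodBalls ha)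
    exact DifferentiableAt.differentiableWithinAt (by fun_prop (disch := assumption))
  · exact div_ne_zero hc0 (polNorm_ne_zero p hz (star_mem_prodBalls ha))
  · rw [gnorm_mob ha hz, map_div₀, hc]
    ring

lemma normSq_conj_eq_gnorm {P : (Fin n → ℂ) × ℂ} (hP : P ∈ circBundle β₁ p) :
    normSq (conj P.2) = gnorm β₁ p P.1 := by
  rw [normSq_conj, hP.2]

/-- The fibrewise exponential from logarithmic fibre coordinates. -/
def expFib (x : (Fin n → ℂ) × ℂ) : (Fin n → ℂ) × ℂ := (x.1, exp x.2)

lemma expFib_zero : expFib (0 : (Fin n → ℂ) × ℂ) = (0, 1) := by simp [expFib]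

lemma differentiable_expFib : Differentiable ℂ (expFib (n := n)) := by
  unfold expFib
  fun_prop

lemma eventually_of_expFib {Q : (Fin n → ℂ) × ℂ → Prop} (h : ∀ᶠ x in 𝓝 0, Q (expFib x)) :
    ∀ᶠ R in 𝓝 ((0, 1) : (Fin n → ℂ) × ℂ), Q R := by
  have hopen : IsOpenMap (expFib (n := n)) := IsOpenMap.id.prodMap isOpenMap_exp
  rw [← expFib_zero]
  exact hopen.nhds_le 0 h

lemma tendsto_expFib : Tendsto (expFib (n := n)) (𝓝 0) (𝓝 (0, 1)) := by
  have := (differentiable_expFib (n := n)).continuous.tendsto 0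
  rwa [expFib_zero] at this

lemma expFib_logShift {a : Fin n → ℂ} (ha : a ∈ prodBalls β₁) (c : ℂ) {x : (Fin n → ℂ) × ℂ}
    (hx : x.1 ∈ prodBalls β₁) :
    expFib (logShift β₁ p a c x) = bundleMob β₁ p a (exp c) (expFib x) := by
  simp only [expFib, logShift, bundleMob, ← exp_neg_pot p hx (star_mem_prodBalls ha), exp_add,
    exp_neg, div_inv_eq_mul, mul_assoc]

lemma expFib_mem_circBundle_iff {x : (Fin n → ℂ) × ℂ} (hx : x.1 ∈ prodBalls β₁) :
    expFib x ∈ circBundle β₁ p ↔ IsRealPt β₁ p x := by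
  have h1 : (expFib x).1 ∈ prodBalls β₁ := hx
  have h2 : normSq (expFib x).2 = Real.exp (2 * x.2.re) := by
    rw [expFib, normSq_eq_norm_sq, norm_exp, ← Real.exp_nat_mul]
    norm_num
  have h3 : IsRealPt β₁ p x ↔ 2 * x.2.re = Real.log (gnorm β₁ p x.1) := by
    rw [IsRealPt, pot_self_star p hx, add_conj, ← sub_eq_add_neg, sub_eq_zero, ofReal_inj]
  rw [h3, circBundle, Set.mem_ofPred_eq, and_iff_right h1, h2]
  constructor
  · intro h
    rw [show gnorm β₁ p x.1 = _ from h.symm, Real.log_exp]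
  · intro h
    rw [h, Real.exp_log (gnorm_pos p hx)]
    rfl

lemma bundleGerm_of_map {N : (Fin n → ℂ) × ℂ → (Fin n → ℂ) × ℂ} (h1 : N (0, 1) = (0, 1))
    (hd : ∀ᶠ R in 𝓝 (0, 1), DifferentiableAt ℂ N R)
    (hm : ∀ᶠ R in 𝓝 (0, 1), R ∈ circBundle β₁ p → N R ∈ circBundle β₂ q) :
    BundleGerm β₁ p β₂ q (fun x => (N (expFib x)).1) (fun x => log (N (expFib x)).2) ∧
      ∀ᶠ x in 𝓝 0, N (expFib x) = expFib ((N (expFib x)).1, log (N (expFib x)).2) := by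
  have hc : Tendsto (fun x => N (expFib x)) (𝓝 0) (𝓝 (0, 1)) := by
    have := hd.self_of_nhds.continuousAt.tendsto
    rw [h1] at this
    exact this.comp tendsto_expFib
  have hslit : ∀ᶠ x in 𝓝 0, (N (expFib x)).2 ∈ slitPlane :=
    (continuous_snd.tendsto _ |>.comp hc).eventually
      (isOpen_slitPlane.mem_nhds one_mem_slitPlane)
  have hmem : ∀ᶠ x in 𝓝 0, (N (expFib x)).1 ∈ prodBalls β₂ :=
    (continuous_fst.tendsto _ |>.comp hc).eventually
      (isOpen_prodBalls.mem_nhds (zero_mem_prodBalls β₂))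
  have hdiff : ∀ᶠ x in 𝓝 0, DifferentiableAt ℂ (fun x => N (expFib x)) x := by
    filter_upwards [tendsto_expFib.eventually hd] with x hx
    exact hx.comp x (differentiable_expFib x)
  have heq : ∀ᶠ x in 𝓝 0, N (expFib x) = expFib ((N (expFib x)).1, log (N (expFib x)).2) := by
    filter_upwards [hslit] with x hx
    exact Prod.ext rfl (exp_log (slitPlane_ne_zero hx)).symm
  refine ⟨⟨hdiff.mono fun x hx => hx.fst, ?_, ?_, ?_, ?_⟩, heq⟩
  · filter_upwards [hdiff, hslit] with x hx hx'
    exact hx.snd.clog hx'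
  · simp [expFib_zero, h1]
  · simp [expFib_zero, h1]
  · filter_upwards [heq, hmem, eventually_mem_fst β₁, tendsto_expFib.eventually hm]
      with x hx1 hx2 hx3 hx4 hx5
    refine (expFib_mem_circBundle_iff
      (x := ((N (expFib x)).1, log (N (expFib x)).2)) hx2).1 ?_
    rw [← hx1]
    exact hx4 ((expFib_mem_circBundle_iff hx3).2 hx5)

/-- A nondegenerate normalized germ is a unitary change of the base coordinates. -/
lemma BundleGerm.exists_isometry {f : (Fin n → ℂ) × ℂ → Fin n → ℂ} {g : (Fin n → ℂ) × ℂ → ℂ}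
    (h : BundleGerm β₁ p β₂ q f g) (hβ₁ : Function.Surjective β₁) (hβ₂ : Function.Surjective β₂)
    (hn : 1 ≤ n) (hp : ∀ i, 0 < p i) (hp1 : ∃ i, p i = 1) (hq : ∀ j, 0 < q j)
    (hq1 : ∃ j, q j = 1) (hrank : 2 ≤ l ∨ 2 ≤ l') (h0 : fderiv ℂ g 0 (0, 1) ≠ 0) :
    ∃ A : (Fin n → ℂ) → Fin n → ℂ, IsBundleIso β₁ p β₂ q (fun P => (A P.1, P.2)) ∧
      ∀ᶠ x in 𝓝 0, f x = A x.1 ∧ g x = x.2 := by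
  obtain ⟨r, hr, hS⟩ := h.symbolMap hn hp hq h0
  have hpot := h.eventually_pot_eq hβ₁ hβ₂ hn hp hq hrank h0
  rw [hr] at hpot
  obtain ⟨rfl, hb, hnorm⟩ := linear_isometry_of_pot_eq hβ₁ hβ₂ hp hp1 hq hq1 hS.pos
    ⟨h.baseDeriv_injective hp h0, h.baseDeriv_surjective hp h0⟩ hpot
  refine ⟨baseDeriv f, ⟨baseDeriv f, fun _ => 1, hb, differentiableOn_const _,
    fun _ _ => one_ne_zero, fun z hz => by simp [hnorm z hz], fun P _ => by simp⟩, ?_⟩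
  filter_upwards [h.eventually_eq_linear hβ₁ hβ₂ hn hp hq hrank h0] with x hx
  simpa [hr] using hx

/-- Either a germ is constant, or it is a bundle isomorphism near some point close to the
base point. -/
lemma eventually_eq_or_exists_isBundleIso {N : (Fin n → ℂ) × ℂ → (Fin n → ℂ) × ℂ}
    (hβ₁ : Function.Surjective β₁) (hβ₂ : Function.Surjective β₂)
    (hn : 1 ≤ n) (hp : ∀ i, 0 < p i) (hp1 : ∃ i, p i = 1) (hq : ∀ j, 0 < q j)
    (hq1 : ∃ j, q j = 1) (hrank : 2 ≤ l ∨ 2 ≤ l') (h1 : N (0, 1) = (0, 1))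
    (hd : ∀ᶠ R in 𝓝 (0, 1), DifferentiableAt ℂ N R)
    (hm : ∀ᶠ R in 𝓝 (0, 1), R ∈ circBundle β₁ p → N R ∈ circBundle β₂ q)
    {S : Set ((Fin n → ℂ) × ℂ)} (hS : S ∈ 𝓝 (0, 1)) :
    (∀ᶠ R in 𝓝 (0, 1), N R = (0, 1)) ∨
      ∃ G, IsBundleIso β₁ p β₂ q G ∧ ∃ R₁ ∈ S, R₁ ∈ circBundle β₁ p ∧ N =ᶠ[𝓝 R₁] G := by
  obtain ⟨h, hexp⟩ := bundleGerm_of_map h1 hd hm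
  set f := fun x => (N (expFib x)).1 with hf
  set g := fun x => log (N (expFib x)).2 with hg
  by_cases h0 : ∀ᶠ x in 𝓝 0, IsRealPt β₁ p x → segreScale β₂ q f g (x, star x) = 0
  · left
    refine eventually_of_expFib ?_
    filter_upwards [h.eventually_eq_zero hn hp hq h0, hexp] with x hx hx'
    rw [hx']
    change expFib (f x, g x) = _
    rw [hx.1, hx.2]
    exact expFib_zero
  · right
    obtain ⟨x₀, hx₀, hgood, hexp₀, hmem⟩ := ((not_eventually.1 h0).and_eventually
      (h.eventually_goodPt.and (hexp.eventually_nhds.and (tendsto_expFib.eventually hS)))).exists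
    push Not at hx₀
    have hG := hgood hx₀.1
    have hR₁ : expFib x₀ ∈ circBundle β₁ p := (expFib_mem_circBundle_iff hG.mem).2 hx₀.1
    have hQ₁ : expFib (f x₀, g x₀) ∈ circBundle β₂ q :=
      (expFib_mem_circBundle_iff (x := (f x₀, g x₀)) hG.map_mem).2 (hG.map_real.self_of_nhds hx₀.1)
    obtain ⟨A, hA, hAeq⟩ := hG.bundleGerm.exists_isometry hβ₁ hβ₂ hn hp hp1 hq hq1 hrank
      (by rw [hG.fderiv_recenter_snd_eq]; exact hx₀.2)
    refine ⟨bundleMob β₂ q (f x₀) (exp (g x₀)) ∘ (fun P => (A P.1, P.2)) ∘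
        bundleMob β₁ p x₀.1 (conj (exp x₀.2)),
      (isBundleIso_bundleMob hG.map_mem hQ₁.2).comp
        (hA.comp (isBundleIso_bundleMob hG.mem (normSq_conj_eq_gnorm hR₁))),
      expFib x₀, hmem, hR₁, ?_⟩
    have hloc : ∀ᶠ R in 𝓝 ((0, 1) : (Fin n → ℂ) × ℂ),
        N (bundleMob β₁ p x₀.1 (exp x₀.2) R) =
          bundleMob β₂ q (f x₀) (exp (g x₀)) (A R.1, R.2) := by
      refine eventually_of_expFib ?_
      have hfst : ∀ᶠ x in 𝓝 0, (recenter β₁ p β₂ q f g x₀ x).1 ∈ prodBalls β₂ :=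
        hG.bundleGerm.eventually_fst_mem
      filter_upwards [hAeq, hG.eventually_map_logShift, hG.tendsto_logShift.eventually hexp₀,
        eventually_mem_fst β₁, hfst] with x hx1 hx2 hx3 hx4 hx5
      rw [← expFib_logShift hG.mem _ hx4, hx3]
      refine (congrArg expFib hx2).trans ?_
      rw [expFib_logShift hG.map_mem _ hx5]
      exact congrArg _ (Prod.ext hx1.1 (congrArg exp hx1.2))
    have hT : Tendsto (bundleMob β₁ p x₀.1 (conj (exp x₀.2))) (𝓝 (expFib x₀)) (𝓝 (0, 1)) := by
      have := (differentiableAt_bundleMob (p := p) hG.mem (conj (exp x₀.2))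
        (P := expFib x₀) hG.mem).continuousAt.tendsto
      rwa [show bundleMob β₁ p x₀.1 (conj (exp x₀.2)) (expFib x₀) = (0, 1) from
        bundleMob_self hR₁] at this
    have hfst : ∀ᶠ R in 𝓝 (expFib x₀), R.1 ∈ prodBalls β₁ :=
      continuous_fst.continuousAt.eventually (isOpen_prodBalls.mem_nhds hG.mem)
    filter_upwards [hT.eventually hloc, hfst] with R hR1 hR2
    rw [bundleMob_bundleMob hG.mem (by rw [mul_comm, mul_conj]; exact congrArg _ hR₁.2) hR2] at hR1
    exact hR1

end BundleIso

/-- Part (3) of the main theorem (with the form of the map as in Remark 1.3), for products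
of balls: assuming one of the two domains has rank (number of factors) at least two, the
map coincides with a norm-preserving holomorphic isomorphism `(z,ξ) ↦ (ψ(z), ξφ(z))` of
the line bundles, where `ψ : Ω₁ → Ω₂` is a biholomorphism, `φ` is holomorphic and nowhere
zero on `Ω₁`, and `ρ₂(ψ(z)) = |φ(z)|² ρ₁(z)` on `Ω₁`. -/
theorem main_theorem_part3 (n : ℕ) (hn : 1 ≤ n) (l l' : ℕ)
    (β₁ : Fin n → Fin l) (hβ₁ : Function.Surjective β₁)
    (β₂ : Fin n → Fin l') (hβ₂ : Function.Surjective β₂)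
    (p : Fin l → ℕ) (hp : ∀ i, 0 < p i) (hp1 : ∃ i, p i = 1)
    (q : Fin l' → ℕ) (hq : ∀ j, 0 < q j) (hq1 : ∃ j, q j = 1)
    (hrank : 2 ≤ l ∨ 2 ≤ l')
    (U : Set ((Fin n → ℂ) × ℂ)) (hUopen : IsOpen U) (hUconn : IsConnected U)
    (hUS : (U ∩ circBundle β₁ p).Nonempty)
    (F : ((Fin n → ℂ) × ℂ) → ((Fin n → ℂ) × ℂ))
    (hF : DifferentiableOn ℂ F U)
    (hFnc : ¬ ∃ c, Set.EqOn F (fun _ => c) U)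
    (hFmap : Set.MapsTo F (U ∩ circBundle β₁ p) (circBundle β₂ q)) :
    ∃ (ψ : (Fin n → ℂ) → (Fin n → ℂ)) (φ : (Fin n → ℂ) → ℂ),
      Biholo ψ (prodBalls β₁) (prodBalls β₂) ∧
      DifferentiableOn ℂ φ (prodBalls β₁) ∧
      (∀ z ∈ prodBalls β₁, φ z ≠ 0) ∧
      (∀ z ∈ prodBalls β₁, gnorm β₂ q (ψ z) = Complex.normSq (φ z) * gnorm β₁ p z) ∧
      ∃ V : Set ((Fin n → ℂ) × ℂ), IsOpen V ∧ V.Nonempty ∧ V ⊆ U ∧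
        Set.EqOn F (fun P => (ψ P.1, P.2 * φ P.1)) V := by
  obtain ⟨P₀, hP₀U, hP₀⟩ := hUS
  have hQ₀ := hFmap ⟨hP₀U, hP₀⟩
  set Q₀ := F P₀ with hQ₀def
  have hb₁ : P₀.2 * conj P₀.2 = gnorm β₁ p P₀.1 := by rw [mul_conj, hP₀.2]
  have hb₁' : conj P₀.2 * P₀.2 = gnorm β₁ p P₀.1 := by rw [mul_comm, hb₁]
  have hb₂ : conj Q₀.2 * Q₀.2 = gnorm β₂ q Q₀.1 := by rw [mul_comm, mul_conj, hQ₀.2]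
  set T := bundleMob β₁ p P₀.1 (conj P₀.2) with hTdef
  set T' := bundleMob β₁ p P₀.1 P₀.2 with hT'def
  set S := bundleMob β₂ q Q₀.1 (conj Q₀.2) with hSdef
  set S' := bundleMob β₂ q Q₀.1 Q₀.2 with hS'def
  have hT'1 : T' (0, 1) = P₀ := by simp [hT'def, bundleMob_zero]
  have hT1 : T P₀ = (0, 1) := bundleMob_self hP₀
  have hT'd : ∀ R : (Fin n → ℂ) × ℂ, R.1 ∈ prodBalls β₁ → DifferentiableAt ℂ T' R :=
    fun R hR => differentiableAt_bundleMob hP₀.1 _ hR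
  have hFd : ∀ P ∈ U, DifferentiableAt ℂ F P := fun P hP =>
    hF.differentiableAt (hUopen.mem_nhds hP)
  have hT't : Tendsto T' (𝓝 (0, 1)) (𝓝 P₀) := by
    have := (hT'd (0, 1) (zero_mem_prodBalls β₁)).continuousAt.tendsto
    rwa [hT'1] at this
  have hgood : ∀ᶠ R in 𝓝 ((0, 1) : (Fin n → ℂ) × ℂ), R.1 ∈ prodBalls β₁ ∧ T' R ∈ U ∧
      (F (T' R)).1 ∈ prodBalls β₂ := by
    have h1 : ∀ᶠ R in 𝓝 ((0, 1) : (Fin n → ℂ) × ℂ), R.1 ∈ prodBalls β₁ :=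
      continuous_fst.continuousAt.eventually (isOpen_prodBalls.mem_nhds (zero_mem_prodBalls β₁))
    have h2 : ∀ᶠ P in 𝓝 P₀, (F P).1 ∈ prodBalls β₂ :=
      ((hFd P₀ hP₀U).continuousAt.fst).eventually (isOpen_prodBalls.mem_nhds hQ₀.1)
    exact h1.and ((hT't.eventually (hUopen.mem_nhds hP₀U)).and (hT't.eventually h2))
  have hN1 : S (F (T' (0, 1))) = (0, 1) := by
    rw [hT'1]
    exact bundleMob_self hQ₀
  have hNd : ∀ᶠ R in 𝓝 (0, 1), DifferentiableAt ℂ (fun R => S (F (T' R))) R := by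
    filter_upwards [hgood] with R hR
    exact (differentiableAt_bundleMob hQ₀.1 _ hR.2.2).comp R
      ((hFd _ hR.2.1).comp R (hT'd R hR.1))
  have hNm : ∀ᶠ R in 𝓝 (0, 1), R ∈ circBundle β₁ p → S (F (T' R)) ∈ circBundle β₂ q := by
    filter_upwards [hgood] with R hR hR'
    exact bundleMob_mem_circBundle hQ₀.1 (normSq_conj_eq_gnorm hQ₀)
      (hFmap ⟨hR.2.1, bundleMob_mem_circBundle hP₀.1 hP₀.2 hR'⟩)
  have hundo : ∀ P : (Fin n → ℂ) × ℂ, P.1 ∈ prodBalls β₁ → (F (T' (T P))).1 ∈ prodBalls β₂ →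
      T' (T P) = P ∧ F P = S' (S (F (T' (T P)))) := by
    intro P hP hFP
    have h1 : T' (T P) = P := bundleMob_bundleMob hP₀.1 hb₁' hP
    refine ⟨h1, ?_⟩
    rw [h1] at hFP ⊢
    exact (bundleMob_bundleMob hQ₀.1 hb₂ hFP).symm
  have hTt : ∀ P : (Fin n → ℂ) × ℂ, P.1 ∈ prodBalls β₁ → Tendsto T (𝓝 P) (𝓝 (T P)) :=
    fun P hP => (differentiableAt_bundleMob hP₀.1 _ hP).continuousAt.tendsto
  have hfst : ∀ P : (Fin n → ℂ) × ℂ, P.1 ∈ prodBalls β₁ → ∀ᶠ P' in 𝓝 P, P'.1 ∈ prodBalls β₁ :=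
    fun P hP => continuous_fst.continuousAt.eventually (isOpen_prodBalls.mem_nhds hP)
  rcases eventually_eq_or_exists_isBundleIso hβ₁ hβ₂ hn hp hp1 hq hq1 hrank hN1 hNd hNm
    hgood.eventually_nhds with hconst | ⟨G, hG, R₁, hR₁, hR₁m, hNG⟩
  · refine absurd ⟨S' (0, 1), eqOn_const_of_eventually_eq hUopen hUconn.isPreconnected hF hP₀U ?_⟩
      hFnc
    have hTt₀ := hTt P₀ hP₀.1
    rw [hT1] at hTt₀
    filter_upwards [hTt₀.eventually hconst, hTt₀.eventually hgood, hfst P₀ hP₀.1] with P h1 h2 h3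
    rw [(hundo P h3 h2.2.2).2, h1]
  · obtain ⟨ψ, φ, hψ, hφ, hφ0, hnorm, heq⟩ := (isBundleIso_bundleMob hQ₀.1 hQ₀.2).comp
      (hG.comp (isBundleIso_bundleMob hP₀.1 (normSq_conj_eq_gnorm hP₀)))
    have hP₁ : (T' R₁).1 ∈ prodBalls β₁ := mob_mem hP₀.1 hR₁m.1
    have hTt₁ := hTt _ hP₁
    rw [show T (T' R₁) = R₁ from bundleMob_bundleMob hP₀.1 hb₁ hR₁m.1] at hTt₁
    have hev : ∀ᶠ P in 𝓝 (T' R₁), P ∈ U ∧ F P = (ψ P.1, P.2 * φ P.1) := by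
      filter_upwards [hTt₁.eventually hNG, hTt₁.eventually hR₁, hfst _ hP₁] with P h1 h2 h3
      obtain ⟨h4, h5⟩ := hundo P h3 h2.2.2
      refine ⟨h4 ▸ h2.2.1, ?_⟩
      rw [h5, h1]
      exact heq P h3
    obtain ⟨V, hV, hVo, hVm⟩ := eventually_nhds_iff.1 hev
    exact ⟨ψ, φ, hψ, hφ, hφ0, hnorm, V, hVo, ⟨_, hVm⟩, fun P hP => (hV P hP).1,
      fun P hP => (hV P hP).2⟩
end
end

section
/- Let a, b ≥ 0 with a + b ≥ 1, and let p be a nonzero polynomial in the variables z₁,…,z_a, w₁,…,w_b with complex coefficients, regarded as an element of the polynomial ring ℂ[z₁,…,z_a, w₁,…,w_b, ξ, η] not involving ξ and η. Then the polynomial q = p − ξ·η is irreducible in ℂ[z₁,…,z_a, w₁,…,w_b, ξ, η]. -/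
noncomputable section

open MvPolynomial

namespace MvPolynomial

variable {σ τ R : Type*} [CommRing R]

lemma inr_notMem_vars_rename_inl (p : MvPolynomial σ R) (j : τ) :
    (Sum.inr j : σ ⊕ τ) ∉ (rename Sum.inl p).vars := by
  classical
  intro h
  simpa using vars_rename _ p h

lemma not_X_inr_dvd_rename_inl {p : MvPolynomial σ R} (hp : p ≠ 0) (j : τ) :
    ¬ (X (Sum.inr j) : MvPolynomial (σ ⊕ τ) R) ∣ rename Sum.inl p := by
  intro h
  have h' := map_dvd (aeval (Sum.elim X fun _ ↦ 0) :
    MvPolynomial (σ ⊕ τ) R →ₐ[R] MvPolynomial σ R) h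
  rw [aeval_rename, Sum.elim_comp_inl, aeval_X_left_apply, aeval_X, Sum.elim_inr,
    zero_dvd_iff] at h'
  exact hp h'

/-- The difference of a nonzero polynomial and a product of two further distinct variables is
irreducible. -/
theorem irreducible_rename_inl_sub_X_mul_X [IsDomain R] {p : MvPolynomial σ R} (hp : p ≠ 0)
    {i j : τ} (hij : i ≠ j) :
    Irreducible (rename Sum.inl p - X (Sum.inr i) * X (Sum.inr j) :
      MvPolynomial (σ ⊕ τ) R) := by
  have h := irreducible_mul_X_add (-X (Sum.inr j) : MvPolynomial (σ ⊕ τ) R) (rename Sum.inl p)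
    (Sum.inr i) (neg_ne_zero.2 (X_ne_zero _)) (by simpa [vars_neg, vars_X] using hij)
    (inr_notMem_vars_rename_inl p i)
    ((X_prime.irreducible.isRelPrime_iff_not_dvd.2 (not_X_inr_dvd_rename_inl hp j)).neg_left)
  convert h using 1
  ring

end MvPolynomial

/-- Proposition 2.7 of the paper: for a nonzero polynomial `p` in the variables
`z₁,…,z_a, w₁,…,w_b` (with `a + b ≥ 1`), regarded inside
`ℂ[z₁,…,z_a, w₁,…,w_b, ξ, η]`, the polynomial `p − ξ·η` is irreducible. -/
theorem prop_2_7 (a b : ℕ) (hab : 1 ≤ a + b)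
    (p : MvPolynomial (Fin a ⊕ Fin b) ℂ) (hp : p ≠ 0) :
    Irreducible
      ((MvPolynomial.rename Sum.inl p -
        MvPolynomial.X (Sum.inr 0) * MvPolynomial.X (Sum.inr 1) :
          MvPolynomial ((Fin a ⊕ Fin b) ⊕ Fin 2) ℂ)) := by
  exact irreducible_rename_inl_sub_X_mul_X hp (by decide)
end
end

section
/- Let n ≥ 1 and let k₁,…,kₙ be positive integers. Define the complexified generic norm ρ(z,w) = ∏_{j=1}^n (1 − z_j w_j)^{k_j} for z, w ∈ ℂⁿ. For (w,η) ∈ ℂⁿ × ℂ let Q_{(w,η)} = {(z,ξ) ∈ ℂⁿ × ℂ : ρ(z,w) − ξ·η = 0}. If (w,η), (w′,η′) ∈ ℂⁿ × ℂ with η ≠ 0 and Q_{(w,η)} ⊆ Q_{(w′,η′)}, then w = w′ and η = η′. -/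
noncomputable section

open Complex

/-- The complexified generic norm `ρ(z,w) = ∏_j (1 − z_j w_j)^{k_j}` of the polydisc. -/
def rhoC {n : ℕ} (k : Fin n → ℕ) (z w : Fin n → ℂ) : ℂ :=
  ∏ j, (1 - z j * w j) ^ (k j)

/-- The Segre variety `Q_{(w,η)} = {(z,ξ) : ρ(z,w) − ξ·η = 0}`. -/
def segre {n : ℕ} (k : Fin n → ℕ) (w : Fin n → ℂ) (η : ℂ) : Set ((Fin n → ℂ) × ℂ) :=
  {P | rhoC k P.1 w - P.2 * η = 0}

theorem mk_mem_segre {n : ℕ} (k : Fin n → ℕ) (z w : Fin n → ℂ) (ξ η : ℂ) :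
    (z, ξ) ∈ segre k w η ↔ rhoC k z w = ξ * η := by
  rw [segre, Set.mem_ofPred_eq, sub_eq_zero]

/-- On a coordinate axis only one factor of `rhoC` survives. -/
theorem rhoC_single {n : ℕ} (k : Fin n → ℕ) (j : Fin n) (t : ℂ) (w : Fin n → ℂ) :
    rhoC k (Pi.single j t) w = (1 - t * w j) ^ k j := by
  unfold rhoC
  rw [Finset.prod_eq_single j]
  · simp
  · intro i _ hij
    simp [hij]
  · simp

/-- Two affine functions `1 - t * a` and `1 - t * b` with equal positive powers coincide. -/
theorem eq_of_one_sub_mul_pow_eq {a b : ℂ} {m : ℕ} (hm : 0 < m)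
    (h : ∀ t : ℂ, (1 - t * a) ^ m = (1 - t * b) ^ m) : a = b := by
  by_cases ha : a = 0
  · subst ha
    by_contra hb
    have hb' : b ≠ 0 := Ne.symm hb
    have := h b⁻¹
    simp [hb', hm.ne'] at this
  · have h0 := h a⁻¹
    rw [inv_mul_cancel₀ ha, sub_self, zero_pow hm.ne'] at h0
    have h1 : 1 - a⁻¹ * b = 0 := pow_eq_zero_iff hm.ne' |>.mp h0.symm
    rw [sub_eq_zero, eq_comm, inv_mul_eq_one₀ ha] at h1
    exact h1

/-- Proposition 2.17(b) of the paper, specialized to the polydisc: if one Segre variety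
with nonzero `η`-coordinate base point is contained in another, the base points agree. -/
theorem segre_determines_point (n : ℕ) (hn : 1 ≤ n)
    (k : Fin n → ℕ) (hk : ∀ j, 0 < k j)
    (w w' : Fin n → ℂ) (η η' : ℂ) (hη : η ≠ 0)
    (hsub : segre k w η ⊆ segre k w' η') :
    w = w' ∧ η = η' := by
  have key (z : Fin n → ℂ) : rhoC k z w' = rhoC k z w / η * η' := by
    rw [← mk_mem_segre]
    apply hsub
    rw [mk_mem_segre, div_mul_cancel₀ _ hη]
  have hηη' : η = η' := by
    have h := key 0
    simp only [rhoC, Pi.zero_apply, zero_mul, sub_zero, one_pow, Finset.prod_const_one] at h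
    field_simp at h
    exact h
  subst hηη'
  refine ⟨funext fun j => eq_of_one_sub_mul_pow_eq (hk j) fun t => ?_, rfl⟩
  rw [← rhoC_single, ← rhoC_single, key, div_mul_cancel₀ _ hη]
end
end
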